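/- arXiv:2404.13763 — 4 statements merged into one kernel-verified Lean document; each statement's English description precedes it below -/
import Mathlib

section
/- For all integers b ≥ 2, 0 ≤ d < b and k ≥ 0, the first moment of the Irwin measure satisfies the exact formula u_{k;1}(b,d) = b/2 − b(2d+1)/(2(b² − b + 1)^{k+1}). -/
open Filter Asymptotics

/-- The `m`-th moment of the Irwin measure:
`u_{k;m}(b,d) = ∑_{l≥0} b^{-l(m+1)} ∑_{n=0}^{b^l-1} [n has exactly k base-b digits d
(padded to length l)] · n^m`. -/
noncomputable def momentU (b d k m : ℕ) : ℝ :=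
  ∑' l : ℕ, ((b : ℝ) ^ (l * (m + 1)))⁻¹ *
    ∑ n ∈ Finset.range (b ^ l),
      (if ((Finset.range l).filter fun i => n / b ^ i % b = d).card = k
        then (n : ℝ) ^ m else 0)

/-- number of digits equal to `d` among the lowest `l` digits -/
def cnt (b d l n : ℕ) : ℕ := ((Finset.range l).filter fun i => n / b ^ i % b = d).card

lemma cnt_succ (b d l q r : ℕ) (hr : r < b) :
    cnt b d (l + 1) (b * q + r) = (if r = d then 1 else 0) + cnt b d l q := by
  have hb : 0 < b := by omega
  unfold cnt
  rw [Finset.card_filter, Finset.card_filter, Finset.sum_range_succ', add_comm]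
  congr 1
  · simp [Nat.mod_eq_of_lt hr]
  · apply Finset.sum_congr rfl
    intro i _
    have : (b * q + r) / b ^ (i + 1) = q / b ^ i := by
      rw [pow_succ', ← Nat.div_div_eq_div_mul, Nat.mul_add_div hb, Nat.div_eq_of_lt hr, add_zero]
    rw [this]

lemma sum_range_mul_split (b N : ℕ) (f : ℕ → ℝ) :
    ∑ n ∈ Finset.range (b * N), f n
      = ∑ q ∈ Finset.range N, ∑ r ∈ Finset.range b, f (b * q + r) := by
  induction N with
  | zero => simp
  | succ N ih => rw [mul_add, mul_one, Finset.sum_range_add, ih, Finset.sum_range_succ]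

lemma sum_digit (b d c k : ℕ) (hd : d < b) (v : ℕ → ℝ) :
    ∑ r ∈ Finset.range b, (if (if r = d then 1 else 0) + c = k then v r else 0)
      = (if c = k then ∑ r ∈ Finset.range b, v r - v d else 0)
        + (if c + 1 = k then v d else 0) := by
  have h : ∀ r ∈ Finset.range b, (if (if r = d then 1 else 0) + c = k then v r else 0)
      = (if c = k then v r else 0)
        + (if r = d then (if c + 1 = k then v d else 0) - (if c = k then v d else 0) else 0) := by
    intro r _
    by_cases h : r = d
    · subst h; simp [add_comm]
    · simp [h]
  rw [Finset.sum_congr rfl h, Finset.sum_add_distrib, Finset.sum_ite_eq' (Finset.range b)]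
  have := Finset.mem_range.2 hd
  by_cases hc : c = k <;> simp [hc, this] <;> ring

/-- power sums -/
noncomputable def T (b d k m l : ℕ) : ℝ :=
  ∑ n ∈ Finset.range (b ^ l), (if cnt b d l n = k then (n : ℝ) ^ m else 0)

/-- shifted power sums -/
noncomputable def Tshift (b d k m l : ℕ) : ℝ :=
  ∑ n ∈ Finset.range (b ^ l), (if cnt b d l n + 1 = k then (n : ℝ) ^ m else 0)

lemma Tshift_zero (b d m l : ℕ) : Tshift b d 0 m l = 0 := by simp [Tshift]
lemma Tshift_succ (b d k m l : ℕ) : Tshift b d (k + 1) m l = T b d k m l := by simp [Tshift, T]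
lemma T_nonneg (b d k m l : ℕ) : 0 ≤ T b d k m l :=
  Finset.sum_nonneg fun n _ => by split_ifs <;> positivity

lemma T_split (b d k m l : ℕ) (hd : d < b) : T b d k m (l + 1) =
    ∑ q ∈ Finset.range (b ^ l),
     ((if cnt b d l q = k then ∑ r ∈ Finset.range b, ((b * q + r : ℕ) : ℝ) ^ m
          - ((b * q + d : ℕ) : ℝ) ^ m else 0)
        + (if cnt b d l q + 1 = k then ((b * q + d : ℕ) : ℝ) ^ m else 0)) := by
  unfold T
  rw [pow_succ', sum_range_mul_split]
  apply Finset.sum_congr rfl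
  intro q _
  rw [← sum_digit b d (cnt b d l q) k hd (fun r => ((b * q + r : ℕ) : ℝ) ^ m)]
  apply Finset.sum_congr rfl
  intro r hr
  rw [cnt_succ b d l q r (Finset.mem_range.1 hr)]

lemma T_zero_rec (b d k l : ℕ) (hd : d < b) :
    T b d k 0 (l + 1) = ((b : ℝ) - 1) * T b d k 0 l + Tshift b d k 0 l := by
  rw [T_split _ _ _ _ _ hd, T, Tshift, Finset.mul_sum, ← Finset.sum_add_distrib]
  apply Finset.sum_congr rfl
  intro q _
  simp

lemma T_one_rec (b d k l : ℕ) (hd : d < b) :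
    T b d k 1 (l + 1) = (b : ℝ) * (b - 1) * T b d k 1 l
      + ((b : ℝ) * (b - 1) / 2 - d) * T b d k 0 l
      + b * Tshift b d k 1 l + d * Tshift b d k 0 l := by
  rw [T_split _ _ _ _ _ hd, T, T, Tshift, Tshift]
  simp only [Finset.mul_sum]
  simp only [← Finset.sum_add_distrib]
  have gauss : ∀ N : ℕ, ∑ r ∈ Finset.range N, (r : ℝ) = (N : ℝ) * (N - 1) / 2 := by
    intro N
    induction N with
    | zero => simp
    | succ N ih => rw [Finset.sum_range_succ, ih]; push_cast; ring
  apply Finset.sum_congr rfl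
  intro q _
  have : ∑ r ∈ Finset.range b, ((b * q + r : ℕ) : ℝ) ^ 1
      = b * (b * q) + (b : ℝ) * (b - 1) / 2 := by
    rw [← gauss b]
    simp [Finset.sum_add_distrib]
  rw [this]
  push_cast
  split_ifs <;> ring

lemma hasSum_rec (x y : ℕ → ℝ) (q Y : ℝ) (hq : 0 ≤ q) (hq1 : q < 1)
    (hx : ∀ n, 0 ≤ x n) (hy0 : ∀ n, 0 ≤ y n) (hy : HasSum y Y)
    (h : ∀ n, x (n + 1) = q * x n + y n) : HasSum x ((x 0 + Y) / (1 - q)) := by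
  have h1 : 0 < 1 - q := by linarith
  have hY : 0 ≤ Y := hy.nonneg hy0
  have hbd : ∀ n, ∑ i ∈ Finset.range n, x i ≤ (x 0 + Y) / (1 - q) := by
    intro n
    induction n with
    | zero => have := hx 0; simp; positivity
    | succ n ih =>
      rw [Finset.sum_range_succ']
      simp only [h, Finset.sum_add_distrib, ← Finset.mul_sum]
      have h2 : ∑ i ∈ Finset.range n, y i ≤ Y := sum_le_hasSum _ (fun i _ => hy0 i) hy
      have h3 := mul_le_mul_of_nonneg_left ih hq
      have h4 : (x 0 + Y) / (1 - q) = q * ((x 0 + Y) / (1 - q)) + (x 0 + Y) := by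
        field_simp; ring
      linarith
  have hs : Summable x := summable_of_sum_range_le hx hbd
  have e1 := hs.tsum_eq_zero_add
  have e2 : ∑' n, x (n + 1) = q * ∑' n, x n + Y := by
    simp only [h]
    exact ((hs.hasSum.mul_left q).add hy).tsum_eq
  have : (x 0 + Y) / (1 - q) = ∑' n, x n := by
    rw [div_eq_iff h1.ne']; linarith
  rw [this]
  exact hs.hasSum

lemma T_init (b d k m : ℕ) : T b d k m 0 = if k = 0 then (0 : ℝ) ^ m else 0 := by
  simp [T, cnt, eq_comm]

lemma hasSum_mzero (b d k : ℕ) (hb : 2 ≤ b) (hd : d < b) :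
    HasSum (fun l => ((b : ℝ) ^ (l * 2))⁻¹ * T b d k 0 l)
      ((b : ℝ) ^ 2 / ((b : ℝ) ^ 2 - b + 1) ^ (k + 1)) := by
  have hbR : (2 : ℝ) ≤ b := by exact_mod_cast hb
  have hb0 : (b : ℝ) ≠ 0 := by positivity
  have hD : 0 < (b : ℝ) ^ 2 - b + 1 := by nlinarith
  have hq : 0 ≤ ((b : ℝ) - 1) / b ^ 2 := div_nonneg (by linarith) (by positivity)
  have hq1 : ((b : ℝ) - 1) / b ^ 2 < 1 := by rw [div_lt_one (by positivity)]; nlinarith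
  have hqD : 1 - ((b : ℝ) - 1) / b ^ 2 = ((b : ℝ) ^ 2 - b + 1) / b ^ 2 := by field_simp; ring
  have hn : ∀ k l, 0 ≤ ((b : ℝ) ^ (l * 2))⁻¹ * T b d k 0 l :=
    fun k l => mul_nonneg (by positivity) (T_nonneg ..)
  induction k with
  | zero =>
    have := hasSum_rec _ (fun _ => 0) _ 0 hq hq1 (hn 0) (fun _ => le_rfl) hasSum_zero (by
      intro l
      rw [T_zero_rec _ _ _ _ hd, Tshift_zero, add_mul, pow_add]
      field_simp
      ring)
    convert this using 1
    rw [hqD, T_init]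
    simp
  | succ k ih =>
    have := hasSum_rec _ _ _ _ hq hq1 (hn (k + 1))
      (fun l => div_nonneg (hn k l) (sq_nonneg (b : ℝ))) (ih.div_const ((b : ℝ) ^ 2)) (by
      intro l
      rw [T_zero_rec _ _ _ _ hd, Tshift_succ, add_mul, pow_add]
      field_simp)
    convert this using 1
    simp only [hqD, T_init]
    have hbb : (b : ℝ) * (b - 1) = ((b : ℝ) ^ 2 - b + 1) - 1 := by ring
    try rw [hbb]
    clear * - hD hb0
    generalize (b : ℝ) ^ 2 - b + 1 = D at hD ⊢
    simp
    field_simp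
    try ring

lemma hasSum_one (b d k : ℕ) (hb : 2 ≤ b) (hd : d < b) :
    HasSum (fun l => ((b : ℝ) ^ (l * 2))⁻¹ * T b d k 1 l)
      ((b : ℝ) / 2
      - (b : ℝ) * (2 * (d : ℝ) + 1) / (2 * ((b : ℝ) ^ 2 - b + 1) ^ (k + 1))) := by
  have hbR : (2 : ℝ) ≤ b := by exact_mod_cast hb
  have hb0 : (b : ℝ) ≠ 0 := by positivity
  have hD : 0 < (b : ℝ) ^ 2 - b + 1 := by nlinarith
  have hq : 0 ≤ ((b : ℝ) - 1) / b := div_nonneg (by linarith) (by positivity)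
  have hq1 : ((b : ℝ) - 1) / b < 1 := by rw [div_lt_one (by positivity)]; linarith
  have hqD : 1 - ((b : ℝ) - 1) / b = 1 / b := by field_simp; ring
  have hn : ∀ k m l, 0 ≤ ((b : ℝ) ^ (l * 2))⁻¹ * T b d k m l :=
    fun k m l => mul_nonneg (by positivity) (T_nonneg ..)
  have hdR : (d : ℝ) ≤ b - 1 := by
    have : (d : ℝ) + 1 ≤ b := by exact_mod_cast hd
    linarith
  have hc : 0 ≤ ((b : ℝ) * (b - 1) / 2 - d) / b ^ 2 :=
    div_nonneg (by nlinarith) (by positivity)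
  induction k with
  | zero =>
    have := hasSum_rec _ _ _ _ hq hq1 (hn 0 1)
      (fun l => mul_nonneg hc (hn 0 0 l))
      ((hasSum_mzero b d 0 hb hd).mul_left (((b : ℝ) * (b - 1) / 2 - d) / b ^ 2)) (by
      intro l
      rw [T_one_rec _ _ _ _ hd, Tshift_zero, Tshift_zero, add_mul, pow_add]
      field_simp
      ring)
    convert this using 1
    simp only [hqD, T_init]
    have hbb : (b : ℝ) * (b - 1) = ((b : ℝ) ^ 2 - b + 1) - 1 := by ring
    try rw [hbb]
    clear * - hD hb0
    generalize (b : ℝ) ^ 2 - b + 1 = D at hD ⊢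
    simp
    field_simp
    try ring
  | succ k ih =>
    have := hasSum_rec _ _ _ _ hq hq1 (hn (k + 1) 1)
      (fun l => add_nonneg (add_nonneg (mul_nonneg hc (hn (k + 1) 0 l))
        (mul_nonneg (by positivity : 0 ≤ 1 / (b : ℝ)) (hn k 1 l)))
        (mul_nonneg (by positivity : 0 ≤ (d : ℝ) / b ^ 2) (hn k 0 l)))
      ((((hasSum_mzero b d (k + 1) hb hd).mul_left (((b : ℝ) * (b - 1) / 2 - d) / b ^ 2)).add
        (ih.mul_left (1 / (b : ℝ)))).add
        ((hasSum_mzero b d k hb hd).mul_left ((d : ℝ) / b ^ 2))) (by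
      intro l
      rw [T_one_rec _ _ _ _ hd, Tshift_succ, Tshift_succ, add_mul, pow_add]
      field_simp
      ring)
    convert this using 1
    simp only [hqD, T_init]
    have hbb : (b : ℝ) * (b - 1) = ((b : ℝ) ^ 2 - b + 1) - 1 := by ring
    try rw [hbb]
    clear * - hD hb0
    generalize (b : ℝ) ^ 2 - b + 1 = D at hD ⊢
    simp
    field_simp
    try ring

theorem momentU_one_exact (b d k : ℕ) (hb : 2 ≤ b) (hd : d < b) :
    momentU b d k 1 = (b : ℝ) / 2
      - (b : ℝ) * (2 * (d : ℝ) + 1) / (2 * ((b : ℝ) ^ 2 - b + 1) ^ (k + 1)) :=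
  (hasSum_one b d k hb hd).tsum_eq
end

section
/- For every pair of fixed integers d ≥ 0 and k ≥ 2, as the integer b → ∞ (with b > d), b/4 − u_{k;3}(b,d) = (d + 1/2)/b^{2k+2} + (d + 1/2)(3d² + (2k−1)/2)/b^{2k+3} + O(b^{−2k−4}), the implied constant depending on d and k. -/
open Filter Asymptotics

open Finset in
theorem irw_sum_blocks (f : ℕ → ℝ) (q c : ℕ) :
    ∑ n ∈ range (c * q), f n = ∑ a ∈ range c, ∑ n ∈ range q, f (a * q + n) := by
  induction c with
  | zero => simp
  | succ c ih => rw [Nat.succ_mul, sum_range_add, ih, sum_range_succ]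

def irwCnt (b d l n : ℕ) : ℕ := ((Finset.range l).filter fun i => n / b ^ i % b = d).card

theorem irwCnt_succ (b d l n a : ℕ) (ha : a < b) (hn : n < b ^ l) :
    irwCnt b d (l + 1) (a * b ^ l + n) = irwCnt b d l n + if a = d then 1 else 0 := by
  have hb : 0 < b := by omega
  have h1 : (a * b ^ l + n) / b ^ l % b = a := by
    rw [Nat.add_comm, Nat.add_mul_div_right _ _ (pow_pos hb l), Nat.div_eq_of_lt hn, zero_add,
      Nat.mod_eq_of_lt ha]
  have h2 : (Finset.range l).filter (fun i => (a * b ^ l + n) / b ^ i % b = d)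
      = (Finset.range l).filter (fun i => n / b ^ i % b = d) := by
    apply Finset.filter_congr
    intro i hi
    have hi' := Finset.mem_range.1 hi
    obtain ⟨t, rfl⟩ : ∃ t, l = i + 1 + t := ⟨l - i - 1, by omega⟩
    have : a * b ^ (i + 1 + t) + n = n + (a * b ^ t * b) * b ^ i := by ring
    rw [this, Nat.add_mul_div_right _ _ (pow_pos hb i), Nat.add_mul_mod_self_right]
  unfold irwCnt
  rw [Finset.range_add_one, Finset.filter_insert, h1, h2]
  split_ifs with h
  · rw [Finset.card_insert_of_notMem (by simp)]
  · rfl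

noncomputable def irwS (b d k m l : ℕ) : ℝ :=
  ∑ n ∈ Finset.range (b ^ l), if irwCnt b d l n = k then (n : ℝ) ^ m else 0

noncomputable def irwT (b d k m l : ℕ) : ℝ := ((b : ℝ) ^ (l * (m + 1)))⁻¹ * irwS b d k m l

theorem momentU_eq (b d k m : ℕ) : momentU b d k m = ∑' l, irwT b d k m l := rfl

noncomputable def irwG (b d j : ℕ) : ℝ := ∑ a ∈ (Finset.range b).erase d, (a : ℝ) ^ j

theorem irw_binom (s : Finset ℕ) (P : ℕ → Prop) [DecidablePred P] (x : ℝ) (m : ℕ) :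
    ∑ n ∈ s, (if P n then (x + (n : ℝ)) ^ m else 0)
     = ∑ j ∈ Finset.range (m + 1), (m.choose j : ℝ) * x ^ (m - j)
        * ∑ n ∈ s, (if P n then (n : ℝ) ^ j else 0) := by
  simp_rw [Finset.mul_sum]
  rw [Finset.sum_comm]
  apply Finset.sum_congr rfl
  intro n _
  split_ifs
  · rw [add_comm, add_pow]
    exact Finset.sum_congr rfl fun j _ => by ring
  · simp

/-- Moments for `k - 1`, with value zero at `k = 0`. -/
noncomputable def irwS' (b d k m l : ℕ) : ℝ :=
  ∑ n ∈ Finset.range (b ^ l), if irwCnt b d l n + 1 = k then (n : ℝ) ^ m else 0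

theorem irwS'_zero (b d m l : ℕ) : irwS' b d 0 m l = 0 := by simp [irwS']
theorem irwS'_succ (b d k m l : ℕ) : irwS' b d (k + 1) m l = irwS b d k m l := by
  simp [irwS', irwS]

theorem irwS_succ (b d k m l : ℕ) (hd : d < b) :
    irwS b d k m (l + 1) =
      ∑ j ∈ Finset.range (m + 1), (m.choose j : ℝ) * ((b : ℝ) ^ l) ^ (m - j) *
        (irwG b d (m - j) * irwS b d k j l + (d : ℝ) ^ (m - j) * irwS' b d k j l) := by
  have hb : 0 < b := by omega
  have key : ∀ a ∈ Finset.range b, ∑ n ∈ Finset.range (b ^ l),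
      (if irwCnt b d (l + 1) (a * b ^ l + n) = k then ((a * b ^ l + n : ℕ) : ℝ) ^ m else 0)
      = ∑ n ∈ Finset.range (b ^ l),
      (if irwCnt b d l n + (if a = d then 1 else 0) = k
        then ((a : ℝ) * (b : ℝ) ^ l + (n : ℝ)) ^ m else 0) := by
    intro a ha
    apply Finset.sum_congr rfl
    intro n hn
    rw [irwCnt_succ b d l n a (Finset.mem_range.1 ha) (Finset.mem_range.1 hn)]
    push_cast
    rfl
  unfold irwS
  rw [pow_succ', irw_sum_blocks, Finset.sum_congr rfl key,
    ← Finset.sum_erase_add _ _ (Finset.mem_range.2 hd)]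
  simp only [mul_add, Finset.sum_add_distrib]
  congr 1
  · have : ∀ a ∈ (Finset.range b).erase d, ∑ n ∈ Finset.range (b ^ l),
      (if irwCnt b d l n + (if a = d then 1 else 0) = k
        then ((a : ℝ) * (b : ℝ) ^ l + (n : ℝ)) ^ m else 0)
        = ∑ j ∈ Finset.range (m + 1), (m.choose j : ℝ) * ((a : ℝ) * (b : ℝ) ^ l) ^ (m - j)
        * irwS b d k j l := by
      intro a ha
      rw [if_neg (Finset.ne_of_mem_erase ha)]
      exact irw_binom _ (fun n => irwCnt b d l n = k) _ m
    rw [Finset.sum_congr rfl this, Finset.sum_comm]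
    apply Finset.sum_congr rfl
    intro j _
    unfold irwG
    change _ = (m.choose j : ℝ) * ((b : ℝ) ^ l) ^ (m - j) * (_ * irwS b d k j l)
    rw [Finset.sum_mul, Finset.mul_sum]
    exact Finset.sum_congr rfl fun a _ => by ring
  · simp only [if_true]
    rw [irw_binom _ (fun n => irwCnt b d l n + 1 = k) _ m]
    exact Finset.sum_congr rfl fun j _ => by unfold irwS'; ring

noncomputable def irwT' (b d k m l : ℕ) : ℝ := ((b : ℝ) ^ (l * (m + 1)))⁻¹ * irwS' b d k m l

theorem irwT'_zero (b d m l : ℕ) : irwT' b d 0 m l = 0 := by simp [irwT', irwS'_zero]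
theorem irwT'_succ (b d k m l : ℕ) : irwT' b d (k + 1) m l = irwT b d k m l := by
  simp [irwT', irwT, irwS'_succ]

theorem irwT_succ (b d k m l : ℕ) (hd : d < b) :
    (b : ℝ) ^ (m + 1) * irwT b d k m (l + 1) =
      ∑ j ∈ Finset.range (m + 1), (m.choose j : ℝ) *
        (irwG b d (m - j) * irwT b d k j l + (d : ℝ) ^ (m - j) * irwT' b d k j l) := by
  have hb : (b : ℝ) ≠ 0 := by
    have : 0 < b := by omega
    positivity
  unfold irwT irwT'
  rw [irwS_succ b d k m l hd, Finset.mul_sum, Finset.mul_sum]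
  apply Finset.sum_congr rfl
  intro j hj
  obtain ⟨t, rfl⟩ : ∃ t, m = j + t := ⟨m - j, by have := Finset.mem_range.1 hj; omega⟩
  rw [Nat.add_sub_cancel_left]
  have e1 : (b : ℝ) ^ ((l + 1) * (j + t + 1))
    = (b : ℝ) ^ (j + t + 1) * ((b : ℝ) ^ (l * (j + 1)) * ((b : ℝ) ^ l) ^ t) := by ring
  rw [e1]
  field_simp

theorem irwT_nonneg (b d k m l : ℕ) : 0 ≤ irwT b d k m l := by
  unfold irwT irwS
  apply mul_nonneg (by positivity)
  exact Finset.sum_nonneg fun n _ => by split_ifs <;> positivity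

theorem irwT_le (b d k m l : ℕ) (hb : 0 < b) : irwT b d k m l ≤ irwT b d k 0 l := by
  have hb' : (0 : ℝ) < b := by positivity
  unfold irwT irwS
  rw [Finset.mul_sum, Finset.mul_sum]
  apply Finset.sum_le_sum
  intro n hn
  split_ifs
  · have : (n : ℝ) ≤ (b : ℝ) ^ l := by exact_mod_cast (Finset.mem_range.1 hn).le
    have h2 : (n : ℝ) ^ m ≤ ((b : ℝ) ^ l) ^ m := by gcongr
    calc ((b : ℝ) ^ (l * (m + 1)))⁻¹ * (n : ℝ) ^ m
        ≤ ((b : ℝ) ^ (l * (m + 1)))⁻¹ * ((b : ℝ) ^ l) ^ m := by gcongr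
      _ = _ := by
        have : (b : ℝ) ^ (l * (m + 1)) = (b : ℝ) ^ l * ((b : ℝ) ^ l) ^ m := by ring
        rw [this]; field_simp; simp
  · simp

theorem irw_summable_aux (x y : ℕ → ℝ) (r : ℝ) (hr : r < 1) (hx : ∀ l, 0 ≤ x l)
    (hy : ∀ l, 0 ≤ y l) (hs : Summable y) (h : ∀ l, x (l + 1) ≤ r * x l + y l)
    (hr0 : 0 ≤ r) : Summable x := by
  apply summable_of_sum_range_le (c := (x 0 + ∑' l, y l) / (1 - r)) hx
  intro n
  rw [le_div_iff₀ (by linarith)]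
  have h1 : ∑ i ∈ Finset.range (n + 1), x i ≤
      r * ∑ i ∈ Finset.range n, x i + ∑ i ∈ Finset.range n, y i + x 0 := by
    rw [Finset.sum_range_succ', Finset.mul_sum, ← Finset.sum_add_distrib]
    gcongr with i _
    exact h i
  have h2 : ∑ i ∈ Finset.range n, y i ≤ ∑' l, y l := hs.sum_le_tsum _ fun i _ => hy i
  have h3 := hx n
  rw [Finset.sum_range_succ] at h1
  nlinarith

theorem irwG_zero (b d : ℕ) (hd : d < b) : irwG b d 0 = (b : ℝ) - 1 := by
  simp [irwG, Finset.card_erase_of_mem (Finset.mem_range.2 hd)]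
  rw [Nat.cast_sub (by omega)]; simp

theorem irwT_summable0 (b d k : ℕ) (hd : d < b) (hb : 2 ≤ b) : Summable (irwT b d k 0) := by
  have hb' : (2 : ℝ) ≤ b := by exact_mod_cast hb
  have main : ∀ k, Summable (irwT' b d k 0) → Summable (irwT b d k 0) := by
    intro k hk
    apply irw_summable_aux _ (fun l => irwT' b d k 0 l / b) (((b : ℝ) - 1) / b)
    · rw [div_lt_one (by linarith)]; linarith
    · exact irwT_nonneg b d k 0
    · intro l
      cases k with
      | zero => simp [irwT'_zero]
      | succ k => rw [irwT'_succ]; exact div_nonneg (irwT_nonneg ..) (by linarith)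
    · exact hk.div_const _
    · intro l
      have := irwT_succ b d k 0 l hd
      simp [irwG_zero b d hd] at this
      apply le_of_eq
      field_simp
      linarith
    · exact div_nonneg (by linarith) (by linarith)
  induction k with
  | zero => exact main 0 (by simp only [funext (irwT'_zero b d 0)]; exact summable_zero)
  | succ k ih => exact main _ (by simpa only [funext (irwT'_succ b d k 0)] using ih)

theorem irwT_summable (b d k m : ℕ) (hd : d < b) (hb : 2 ≤ b) : Summable (irwT b d k m) :=
  Summable.of_nonneg_of_le (irwT_nonneg b d k m) (fun l => irwT_le b d k m l (by omega))
    (irwT_summable0 b d k hd hb)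

theorem irwT_at_zero (b d k m : ℕ) : irwT b d k m 0 = if k = 0 ∧ m = 0 then 1 else 0 := by
  simp [irwT, irwS, irwCnt]
  rcases k with _ | k <;> rcases m with _ | m <;> simp

theorem momentU_zero_rec (b d m : ℕ) (hd : d < b) (hb : 2 ≤ b) :
    (b : ℝ) ^ (m + 1) * momentU b d 0 m = (if m = 0 then (b : ℝ) else 0) +
      ∑ j ∈ Finset.range (m + 1), (m.choose j : ℝ) * (irwG b d (m - j) * momentU b d 0 j) := by
  simp only [momentU_eq]
  have hs := fun j => irwT_summable b d 0 j hd hb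
  rw [(hs m).tsum_eq_zero_add, mul_add, ← tsum_mul_left]
  congr 1
  · rw [irwT_at_zero]; rcases m with _ | m <;> simp
  · simp_rw [irwT_succ b d 0 m _ hd, irwT'_zero, ← tsum_mul_left, mul_zero, add_zero]
    rw [Summable.tsum_finsetSum]
    exact fun j _ => ((hs j).mul_left _).mul_left _

theorem momentU_succ_rec (b d k m : ℕ) (hd : d < b) (hb : 2 ≤ b) :
    (b : ℝ) ^ (m + 1) * momentU b d (k + 1) m =
      ∑ j ∈ Finset.range (m + 1), (m.choose j : ℝ) * (irwG b d (m - j) * momentU b d (k + 1) j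
        + (d : ℝ) ^ (m - j) * momentU b d k j) := by
  simp only [momentU_eq]
  have hs := fun k j => irwT_summable b d k j hd hb
  rw [(hs (k + 1) m).tsum_eq_zero_add, mul_add, ← tsum_mul_left, irwT_at_zero]
  simp_rw [irwT_succ b d (k + 1) m _ hd, irwT'_succ]
  rw [Summable.tsum_finsetSum]
  · simp only [Nat.add_eq_zero_iff, one_ne_zero, and_false, false_and, if_false, mul_zero, zero_add]
    apply Finset.sum_congr rfl
    intro j _
    rw [tsum_mul_left, Summable.tsum_add ((hs _ _).mul_left _) ((hs _ _).mul_left _),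
      tsum_mul_left, tsum_mul_left]
  · exact fun j _ => (((hs _ j).mul_left _).add ((hs _ j).mul_left _)).mul_left _

theorem irwG_eq (b d j : ℕ) (hd : d < b) :
    irwG b d j = ∑ a ∈ Finset.range b, (a : ℝ) ^ j - (d : ℝ) ^ j := by
  rw [← Finset.sum_erase_add _ _ (Finset.mem_range.2 hd)]; simp [irwG]

theorem irwG1 (b d : ℕ) (hd : d < b) : irwG b d 1 = (b : ℝ) * (b - 1) / 2 - d := by
  rw [irwG_eq b d 1 hd]
  have : ∀ n : ℕ, ∑ a ∈ Finset.range n, (a : ℝ) ^ 1 = (n : ℝ) * (n - 1) / 2 := by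
    intro n
    induction n with
    | zero => simp
    | succ n ih => rw [Finset.sum_range_succ, ih]; push_cast; ring
  rw [this]; ring

theorem irwG2 (b d : ℕ) (hd : d < b) :
    irwG b d 2 = (b : ℝ) * (b - 1) * (2 * b - 1) / 6 - (d : ℝ) ^ 2 := by
  rw [irwG_eq b d 2 hd]
  have : ∀ n : ℕ, ∑ a ∈ Finset.range n, (a : ℝ) ^ 2 = (n : ℝ) * (n - 1) * (2 * n - 1) / 6 := by
    intro n
    induction n with
    | zero => simp
    | succ n ih => rw [Finset.sum_range_succ, ih]; push_cast; ring
  rw [this]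

theorem irwG3 (b d : ℕ) (hd : d < b) :
    irwG b d 3 = (b : ℝ) ^ 2 * (b - 1) ^ 2 / 4 - (d : ℝ) ^ 3 := by
  rw [irwG_eq b d 3 hd]
  have : ∀ n : ℕ, ∑ a ∈ Finset.range n, (a : ℝ) ^ 3 = (n : ℝ) ^ 2 * (n - 1) ^ 2 / 4 := by
    intro n
    induction n with
    | zero => simp
    | succ n ih => rw [Finset.sum_range_succ, ih]; push_cast; ring
  rw [this]

theorem momentU_m0 (b d k : ℕ) (hd : d < b) (hb : 2 ≤ b) : momentU b d k 0 = b := by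
  induction k with
  | zero =>
    have := momentU_zero_rec b d 0 hd hb
    simp [irwG_zero b d hd] at this
    linarith
  | succ k ih =>
    have := momentU_succ_rec b d k 0 hd hb
    simp [irwG_zero b d hd, ih] at this
    linarith

/-- The deficit `b/(m+1) - u_{k;m}`. -/
noncomputable def irwE (d k m : ℕ) (b : ℕ) : ℝ := (b : ℝ) / (m + 1) - momentU b d k m

theorem irwE1_zero (b d : ℕ) (hd : d < b) (hb : 2 ≤ b) :
    ((b : ℝ) ^ 2 - b + 1) * irwE d 0 1 b = b * (d + 1 / 2) := by
  have := momentU_zero_rec b d 1 hd hb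
  simp [irwG_zero b d hd, irwG1 b d hd, Finset.sum_range_succ, momentU_m0 b d _ hd hb] at this
  simp only [irwE]; push_cast
  linear_combination -this

theorem irwE1_succ (b d k : ℕ) (hd : d < b) (hb : 2 ≤ b) :
    ((b : ℝ) ^ 2 - b + 1) * irwE d (k + 1) 1 b = irwE d k 1 b := by
  have := momentU_succ_rec b d k 1 hd hb
  simp [irwG_zero b d hd, irwG1 b d hd, Finset.sum_range_succ, momentU_m0 b d _ hd hb] at this
  simp only [irwE]; push_cast
  linear_combination -this

theorem irwE2_zero (b d : ℕ) (hd : d < b) (hb : 2 ≤ b) :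
    ((b : ℝ) ^ 3 - b + 1) * irwE d 0 2 b =
      ((b : ℝ) * (b - 1) - 2 * d) * irwE d 0 1 b + b * (d ^ 2 + d + 1 / 3) := by
  have := momentU_zero_rec b d 2 hd hb
  simp [irwG_zero b d hd, irwG1 b d hd, irwG2 b d hd, Finset.sum_range_succ,
    momentU_m0 b d _ hd hb] at this
  simp only [irwE]; push_cast
  linear_combination -this

theorem irwE2_succ (b d k : ℕ) (hd : d < b) (hb : 2 ≤ b) :
    ((b : ℝ) ^ 3 - b + 1) * irwE d (k + 1) 2 b =
      ((b : ℝ) * (b - 1) - 2 * d) * irwE d (k + 1) 1 b + 2 * d * irwE d k 1 b + irwE d k 2 b := by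
  have := momentU_succ_rec b d k 2 hd hb
  simp [irwG_zero b d hd, irwG1 b d hd, irwG2 b d hd, Finset.sum_range_succ,
    momentU_m0 b d _ hd hb] at this
  simp only [irwE]; push_cast
  linear_combination -this

theorem irwE3_zero (b d : ℕ) (hd : d < b) (hb : 2 ≤ b) :
    ((b : ℝ) ^ 4 - b + 1) * irwE d 0 3 b =
      ((b : ℝ) ^ 3 - 3 / 2 * b ^ 2 + b / 2 - 3 * d ^ 2) * irwE d 0 1 b
      + (3 / 2 * (b : ℝ) ^ 2 - 3 / 2 * b - 3 * d) * irwE d 0 2 b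
      + b * (d ^ 3 + 3 / 2 * d ^ 2 + d + 1 / 4) := by
  have := momentU_zero_rec b d 3 hd hb
  simp [irwG_zero b d hd, irwG1 b d hd, irwG2 b d hd, irwG3 b d hd, Finset.sum_range_succ,
    momentU_m0 b d _ hd hb, Nat.choose] at this
  simp only [irwE]; push_cast
  linear_combination -this

theorem irwE3_succ (b d k : ℕ) (hd : d < b) (hb : 2 ≤ b) :
    ((b : ℝ) ^ 4 - b + 1) * irwE d (k + 1) 3 b =
      ((b : ℝ) ^ 3 - 3 / 2 * b ^ 2 + b / 2 - 3 * d ^ 2) * irwE d (k + 1) 1 b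
      + (3 / 2 * (b : ℝ) ^ 2 - 3 / 2 * b - 3 * d) * irwE d (k + 1) 2 b
      + 3 * d ^ 2 * irwE d k 1 b + 3 * d * irwE d k 2 b + irwE d k 3 b := by
  have := momentU_succ_rec b d k 3 hd hb
  simp [irwG_zero b d hd, irwG1 b d hd, irwG2 b d hd, irwG3 b d hd, Finset.sum_range_succ,
    momentU_m0 b d _ hd hb, Nat.choose] at this
  simp only [irwE]; push_cast
  linear_combination -this

/-- `f = O(b^n)` as `b → ∞`, with an integer exponent. -/
def IrwOrd (f : ℕ → ℝ) (n : ℤ) : Prop := f =O[atTop] fun b : ℕ => (b : ℝ) ^ n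

theorem IrwOrd.mono {f : ℕ → ℝ} {n m : ℤ} (h : IrwOrd f n) (hnm : n ≤ m) : IrwOrd f m := by
  refine IsBigO.trans h ?_
  apply IsBigO.of_bound 1
  filter_upwards [eventually_ge_atTop 1] with b hb
  have hb' : (1 : ℝ) ≤ b := by exact_mod_cast hb
  rw [Real.norm_of_nonneg (by positivity), Real.norm_of_nonneg (by positivity), one_mul]
  exact zpow_le_zpow_right₀ hb' hnm

theorem IrwOrd.add {f g : ℕ → ℝ} {n : ℤ} (hf : IrwOrd f n) (hg : IrwOrd g n) :
    IrwOrd (fun b => f b + g b) n := IsBigO.add hf hg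

theorem IrwOrd.sub {f g : ℕ → ℝ} {n : ℤ} (hf : IrwOrd f n) (hg : IrwOrd g n) :
    IrwOrd (fun b => f b - g b) n := IsBigO.sub hf hg

theorem IrwOrd.congr {f g : ℕ → ℝ} {n : ℤ} (hf : IrwOrd f n) (h : ∀ᶠ b in atTop, f b = g b) :
    IrwOrd g n := IsBigO.congr' hf h (EventuallyEq.refl _ _)

theorem IrwOrd.mul {f g : ℕ → ℝ} {n m : ℤ} (hf : IrwOrd f n) (hg : IrwOrd g m) :
    IrwOrd (fun b => f b * g b) (n + m) := by
  refine (IsBigO.mul hf hg).congr' (EventuallyEq.refl _ _) ?_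
  filter_upwards [eventually_ge_atTop 1] with b hb
  have hb' : (b : ℝ) ≠ 0 := by positivity
  rw [zpow_add₀ hb']

theorem IrwOrd.const (c : ℝ) : IrwOrd (fun _ => c) 0 := by
  unfold IrwOrd
  simp only [zpow_zero]
  exact isBigO_const_const c one_ne_zero atTop

theorem IrwOrd.zpow (n : ℤ) : IrwOrd (fun b => (b : ℝ) ^ n) n := isBigO_refl _ _

theorem IrwOrd.pow (n : ℕ) : IrwOrd (fun b => (b : ℝ) ^ n) n := by
  simpa using IrwOrd.zpow (n : ℤ)

theorem IrwOrd.id : IrwOrd (fun b => (b : ℝ)) 1 := by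
  simpa using IrwOrd.zpow 1

theorem IrwOrd.cmul {f : ℕ → ℝ} {n : ℤ} (c : ℝ) (hf : IrwOrd f n) :
    IrwOrd (fun b => c * f b) n := by simpa using (IrwOrd.const c).mul hf

theorem IrwOrd.div {f g : ℕ → ℝ} {n : ℤ} (p : ℕ) (hp : 2 ≤ p) (hg : IrwOrd g n)
    (h : ∀ᶠ b : ℕ in atTop, ((b : ℝ) ^ p - b + 1) * f b = g b) : IrwOrd f (n - p) := by
  have hD : IrwOrd (fun b : ℕ => ((b : ℝ) ^ p - b + 1)⁻¹) (-p) := by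
    apply IsBigO.of_bound 2
    filter_upwards [eventually_ge_atTop 2] with b hb
    have hb' : (2 : ℝ) ≤ b := by exact_mod_cast hb
    have h1 : (b : ℝ) ^ 2 ≤ (b : ℝ) ^ p := pow_le_pow_right₀ (by linarith) hp
    have h2 : (b : ℝ) ^ p / 2 ≤ (b : ℝ) ^ p - b + 1 := by nlinarith
    have h3 : 0 < (b : ℝ) ^ p := by positivity
    rw [Real.norm_of_nonneg (by rw [inv_nonneg]; linarith), Real.norm_of_nonneg (by positivity),
      zpow_neg, zpow_natCast]
    calc ((b : ℝ) ^ p - b + 1)⁻¹ ≤ ((b : ℝ) ^ p / 2)⁻¹ := by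
          apply inv_anti₀ (by positivity) h2
      _ = _ := by field_simp
  have := (hD.mul hg).mono (show -(p : ℤ) + n ≤ n - p by omega)
  refine this.congr ?_
  filter_upwards [h, eventually_ge_atTop 2] with b hb hb2
  have hb' : (2 : ℝ) ≤ b := by exact_mod_cast hb2
  have h1 : (b : ℝ) ^ 2 ≤ (b : ℝ) ^ p := pow_le_pow_right₀ (by linarith) hp
  have : (b : ℝ) ^ p - b + 1 ≠ 0 := by nlinarith
  rw [← hb]; field_simp

theorem irw_ev (d : ℕ) : ∀ᶠ b : ℕ in atTop, d < b ∧ 2 ≤ b :=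
  (eventually_gt_atTop d).and (eventually_ge_atTop 2)

/-- Second order expansion of the first deficit. -/
theorem irwE1_exp (d k : ℕ) :
    IrwOrd (fun b => irwE d k 1 b - ((d : ℝ) + 1 / 2) * ((b : ℝ) + (k + 1)) *
      (b : ℝ) ^ (-2 * (k : ℤ) - 2)) (-2 * (k : ℤ) - 3) := by
  induction k with
  | zero =>
    have hg : IrwOrd (fun b : ℕ => (-((d : ℝ) + 1 / 2)) * (b : ℝ) ^ (-2 : ℤ)) (-1) :=
      ((IrwOrd.zpow (-2)).cmul _).mono (by norm_num)
    refine (IrwOrd.div 2 le_rfl hg ?_).mono (by norm_num)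
    filter_upwards [irw_ev d] with b hb
    have hb0 : (b : ℝ) ≠ 0 := by have : 0 < b := by omega
                                 positivity
    rw [mul_sub, irwE1_zero b d hb.1 hb.2]
    norm_num
    field_simp
    ring
  | succ k ih =>
    have hg := ih.sub ((((IrwOrd.id.cmul (-(k + 1 : ℝ))).add
      ((IrwOrd.const (k + 2 : ℝ)).mono (by norm_num))).cmul ((d : ℝ) + 1 / 2)).mul
        (IrwOrd.zpow (-2 * (k : ℤ) - 4)) |>.mono (show _ ≤ -2 * (k : ℤ) - 3 by omega))
    refine (IrwOrd.div 2 le_rfl hg ?_).mono (by push_cast; omega)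
    filter_upwards [irw_ev d] with b hb
    have hb0 : (b : ℝ) ≠ 0 := by have : 0 < b := by omega
                                 positivity
    rw [mul_sub, irwE1_succ b d k hb.1 hb.2]
    have e1 : (b : ℝ) ^ (-2 * (k : ℤ) - 2) = (b : ℝ) ^ (-2 * (k : ℤ) - 4) * (b : ℝ) ^ 2 := by
      rw [← zpow_natCast, ← zpow_add₀ hb0]; congr 1; push_cast; ring
    have e2 : (b : ℝ) ^ (-2 * ((k + 1 : ℕ) : ℤ) - 2) = (b : ℝ) ^ (-2 * (k : ℤ) - 4) := by
      congr 1; push_cast; ring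
    rw [e1, e2]
    push_cast
    ring

theorem irwE1_ord (d k : ℕ) : IrwOrd (irwE d k 1) (-2 * (k : ℤ) - 1) := by
  have h := ((irwE1_exp d k).mono (show _ ≤ -2 * (k : ℤ) - 1 by omega)).add
    ((((IrwOrd.id.add ((IrwOrd.const (k + 1 : ℝ)).mono (by norm_num))).cmul
      ((d : ℝ) + 1 / 2)).mul (IrwOrd.zpow (-2 * (k : ℤ) - 2))).mono
        (show _ ≤ -2 * (k : ℤ) - 1 by omega))
  exact h.congr (Eventually.of_forall fun b => by ring)

/-- A quadratic polynomial is `O(b^2)`. -/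
theorem irw_quad (p q r : ℝ) : IrwOrd (fun b => p * (b : ℝ) ^ 2 + q * b + r) 2 :=
  (((IrwOrd.pow 2).cmul p).add ((IrwOrd.id.cmul q).mono (by norm_num))).add
    ((IrwOrd.const r).mono (by norm_num))

theorem irw_cubic (s p q r : ℝ) :
    IrwOrd (fun b => s * (b : ℝ) ^ 3 + (p * (b : ℝ) ^ 2 + q * b + r)) 3 :=
  ((IrwOrd.pow 3).cmul s).add ((irw_quad p q r).mono (by norm_num))

theorem irwE2_ord (d k : ℕ) : IrwOrd (irwE d k 2) (-2 * (k : ℤ) - 2) := by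
  induction k with
  | zero =>
    have hg := ((irw_quad 1 (-1) (-2 * d)).mul (irwE1_ord d 0)).add
      ((IrwOrd.id.cmul ((d : ℝ) ^ 2 + d + 1 / 3)).mono (by norm_num))
    refine (IrwOrd.div 3 (by norm_num) hg ?_).mono (by norm_num)
    filter_upwards [irw_ev d] with b hb
    rw [irwE2_zero b d hb.1 hb.2]; ring
  | succ k ih =>
    have hg := ((((irw_quad 1 (-1) (-2 * d)).mul (irwE1_ord d (k + 1))).mono
      (show _ ≤ -2 * (k : ℤ) - 1 by push_cast; omega)).add ((irwE1_ord d k).cmul (2 * d))).add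
        (ih.mono (by omega))
    refine (IrwOrd.div 3 (by norm_num) hg ?_).mono (by push_cast; omega)
    filter_upwards [irw_ev d] with b hb
    rw [irwE2_succ b d k hb.1 hb.2]; ring

theorem irwE3_ord (d k : ℕ) : IrwOrd (irwE d k 3) (-2 * (k : ℤ) - 2) := by
  induction k with
  | zero =>
    have hg := ((((irw_cubic 1 (-3 / 2) (1 / 2) (-3 * d ^ 2)).mul (irwE1_ord d 0)).mono
        (show _ ≤ (2 : ℤ) by norm_num)).add
      (((irw_quad (3 / 2) (-3 / 2) (-3 * d)).mul (irwE2_ord d 0)).mono (by norm_num))).add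
      ((IrwOrd.id.cmul ((d : ℝ) ^ 3 + 3 / 2 * d ^ 2 + d + 1 / 4)).mono (by norm_num))
    refine (IrwOrd.div 4 (by norm_num) hg ?_).mono (by norm_num)
    filter_upwards [irw_ev d] with b hb
    rw [irwE3_zero b d hb.1 hb.2]; ring
  | succ k ih =>
    have hg := ((((((irw_cubic 1 (-3 / 2) (1 / 2) (-3 * d ^ 2)).mul (irwE1_ord d (k + 1))).mono
        (show _ ≤ -2 * (k : ℤ) by push_cast; omega)).add
      (((irw_quad (3 / 2) (-3 / 2) (-3 * d)).mul (irwE2_ord d (k + 1))).mono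
        (by push_cast; omega))).add
      (((irwE1_ord d k).cmul (3 * d ^ 2)).mono (by omega))).add
      (((irwE2_ord d k).cmul (3 * d)).mono (by omega))).add (ih.mono (by omega))
    refine (IrwOrd.div 4 (by norm_num) hg ?_).mono (by push_cast; omega)
    filter_upwards [irw_ev d] with b hb
    rw [irwE3_succ b d k hb.1 hb.2]; ring

theorem irwE3_exp (d k : ℕ) :
    IrwOrd (fun b => irwE d (k + 1) 3 b - ((d : ℝ) + 1 / 2) *
      ((b : ℝ) + (3 * d ^ 2 + (k + 1 / 2))) * (b : ℝ) ^ (-2 * (k : ℤ) - 5))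
      (-2 * (k : ℤ) - 6) := by
  -- the difference of the polynomial main parts, in units of `b ^ (-2k-5)`
  have h1 : IrwOrd (fun b => (1 * (b : ℝ) ^ 3 + (-3 / 2 * (b : ℝ) ^ 2 + 1 / 2 * b + -3 * d ^ 2)) *
      (irwE d (k + 1) 1 b - ((d : ℝ) + 1 / 2) * ((b : ℝ) + ((k + 1 : ℕ) + 1)) *
      (b : ℝ) ^ (-2 * ((k + 1 : ℕ) : ℤ) - 2))) (-2 * (k : ℤ) - 2) :=
    ((irw_cubic 1 (-3 / 2) (1 / 2) (-3 * d ^ 2)).mul (irwE1_exp d (k + 1))).mono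
      (by push_cast; omega)
  have h2 : IrwOrd (fun b => 3 * (d : ℝ) ^ 2 * (irwE d k 1 b - ((d : ℝ) + 1 / 2) *
      ((b : ℝ) + (k + 1)) * (b : ℝ) ^ (-2 * (k : ℤ) - 2))) (-2 * (k : ℤ) - 2) :=
    ((irwE1_exp d k).cmul _).mono (by omega)
  have h3 : IrwOrd (fun b => (3 / 2 * (b : ℝ) ^ 2 + -3 / 2 * b + -3 * d) * irwE d (k + 1) 2 b)
      (-2 * (k : ℤ) - 2) :=
    ((irw_quad (3 / 2) (-3 / 2) (-3 * d)).mul (irwE2_ord d (k + 1))).mono (by push_cast; omega)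
  have h4 := (irwE2_ord d k).cmul (3 * d)
  have h5 := irwE3_ord d k
  have h6 := ((irw_cubic (1 / 2 - 3 / 2 * (k + 2) + 3 * d ^ 2 * (k + 1))
    ((k + 2) / 2 - 3 * d ^ 2 + 1) (-3 * d ^ 2 * (k + 2) + (3 * d ^ 2 + (k + 1 / 2)) - 1)
    (-(3 * d ^ 2 + (k + 1 / 2)))).cmul ((d : ℝ) + 1 / 2)).mul (IrwOrd.zpow (-2 * (k : ℤ) - 5))
    |>.mono (show _ ≤ -2 * (k : ℤ) - 2 by omega)
  have hg := ((((h1.add h2).add h3).add h4).add h5).add h6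
  refine (IrwOrd.div 4 (by norm_num) hg ?_).mono (by push_cast; omega)
  filter_upwards [irw_ev d] with b hb
  have hb0 : (b : ℝ) ≠ 0 := by
    have : 0 < b := by omega
    positivity
  rw [mul_sub, irwE3_succ b d k hb.1 hb.2]
  have e1 : (b : ℝ) ^ (-2 * (k : ℤ) - 2) = (b : ℝ) ^ (-2 * (k : ℤ) - 5) * (b : ℝ) ^ 3 := by
    rw [← zpow_natCast, ← zpow_add₀ hb0]; congr 1; push_cast; ring
  have e2 : (b : ℝ) ^ (-2 * ((k + 1 : ℕ) : ℤ) - 2) = (b : ℝ) ^ (-2 * (k : ℤ) - 5) * b := by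
    rw [← zpow_add_one₀ hb0]; congr 1; push_cast; ring
  rw [e1, e2]
  push_cast
  ring

theorem momentU_three_asymptotic (d k : ℕ) (hk : 2 ≤ k) :
    (fun b : ℕ => (b : ℝ) / 4 - momentU b d k 3 -
      (((d : ℝ) + 1 / 2) / (b : ℝ) ^ (2 * k + 2)
        + ((d : ℝ) + 1 / 2) * (3 * (d : ℝ) ^ 2 + (2 * (k : ℝ) - 1) / 2) / (b : ℝ) ^ (2 * k + 3)))
      =O[atTop] fun b : ℕ => ((b : ℝ) ^ (2 * k + 4))⁻¹ := by
  obtain ⟨k, rfl⟩ : ∃ j, k = j + 1 := ⟨k - 1, by omega⟩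
  have h := irwE3_exp d k
  refine IsBigO.congr' h ?_ ?_
  · filter_upwards [eventually_ge_atTop 1] with b hb
    have hb0 : (b : ℝ) ≠ 0 := by positivity
    have e1 : (b : ℝ) ^ (-2 * (k : ℤ) - 5) = ((b : ℝ) ^ (2 * (k + 1) + 3))⁻¹ := by
      rw [← zpow_natCast, ← zpow_neg]; congr 1; push_cast; ring
    have e2 : (b : ℝ) ^ (2 * (k + 1) + 3) = (b : ℝ) ^ (2 * (k + 1) + 2) * b := pow_succ _ _
    have hp : (b : ℝ) ^ (2 * (k + 1) + 2) ≠ 0 := pow_ne_zero _ hb0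
    rw [e1, e2]
    unfold irwE
    generalize (b : ℝ) ^ (2 * (k + 1) + 2) = z at hp
    push_cast
    field_simp
    ring
  · filter_upwards with b
    rw [← zpow_natCast, ← zpow_neg]; congr 1; push_cast; ring
end

section
/- For every triple of fixed integers d ≥ 0, k ≥ 1 and m ≥ 1, as the integer b → ∞ (with b > d), the complementary moment satisfies v_{k;m}(b,d) = b/(m+1) + (d + 1/2)m/b^{2k+1} + (d + 1/2)(1 + mk − m(m−1)d)/b^{2k+2} + O(b^{−2k−3}), the implied constant depending on d, k and m. -/
open Filter Asymptotics

/-- The `m`-th complementary moment of the Irwin measure: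
`v_{k;m}(b,d) = ∑_{l≥0} b^{-l(m+1)} ∑_{n=0}^{b^l-1} [n has exactly k base-b digits d
(padded to length l)] · (b^l - n)^m`. -/
noncomputable def momentV (b d k m : ℕ) : ℝ :=
  ∑' l : ℕ, ((b : ℝ) ^ (l * (m + 1)))⁻¹ *
    ∑ n ∈ Finset.range (b ^ l),
      (if ((Finset.range l).filter fun i => n / b ^ i % b = d).card = k
        then ((b : ℝ) ^ l - n) ^ m else 0)

/-- digit count -/
def cntD (b d l n : ℕ) : ℕ := ((Finset.range l).filter fun i => n / b ^ i % b = d).card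

/-- finite level sums -/
noncomputable def lvT (b d k m l : ℕ) : ℝ :=
  ∑ n ∈ Finset.range (b ^ l), (if cntD b d l n = k then ((b : ℝ) ^ l - n) ^ m else 0)

/-- finite level sums, with shifted index -/
noncomputable def lvT' (b d k m l : ℕ) : ℝ :=
  ∑ n ∈ Finset.range (b ^ l), (if cntD b d l n + 1 = k then ((b : ℝ) ^ l - n) ^ m else 0)

/-- normalised level sums -/
noncomputable def lvS (b d k m l : ℕ) : ℝ := ((b : ℝ) ^ (l * (m + 1)))⁻¹ * lvT b d k m l

/-- normalised shifted level sums -/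
noncomputable def lvS' (b d k m l : ℕ) : ℝ := ((b : ℝ) ^ (l * (m + 1)))⁻¹ * lvT' b d k m l

/-- power sums over the digits other than d -/
noncomputable def gS (b d i : ℕ) : ℝ := ∑ a ∈ (Finset.range b).erase d, ((b : ℝ) - 1 - a) ^ i

theorem momentV_eq (b d k m : ℕ) : momentV b d k m = ∑' l, lvS b d k m l := rfl

theorem lvS'_zero (b d m l : ℕ) : lvS' b d 0 m l = 0 := by simp [lvS', lvT']

theorem lvS'_succ (b d k m l : ℕ) : lvS' b d (k + 1) m l = lvS b d k m l := by
  simp [lvS', lvT', lvS, lvT]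

theorem cntD_succ (b d l n a : ℕ) (ha : a < b) (hn : n < b ^ l) :
    cntD b d (l + 1) (a * b ^ l + n) = cntD b d l n + if a = d then 1 else 0 := by
  have hb : 0 < b := by omega
  unfold cntD
  rw [Finset.range_add_one, Finset.filter_insert]
  have h1 : (a * b ^ l + n) / b ^ l % b = a := by
    rw [mul_comm, Nat.mul_add_div (by positivity), Nat.div_eq_of_lt hn, add_zero,
      Nat.mod_eq_of_lt ha]
  have h2 : (Finset.range l).filter (fun i => (a * b ^ l + n) / b ^ i % b = d)
      = (Finset.range l).filter (fun i => n / b ^ i % b = d) := by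
    apply Finset.filter_congr
    intro i hi
    have hi' : i < l := Finset.mem_range.1 hi
    obtain ⟨c, rfl⟩ : ∃ c, l = i + 1 + c := ⟨l - (i + 1), by omega⟩
    have : a * b ^ (i + 1 + c) + n = b ^ i * (b * (a * b ^ c)) + n := by ring
    rw [this, Nat.mul_add_div (by positivity), Nat.mul_add_mod]
  rw [h1, h2]
  split_ifs with h
  · rw [Finset.card_insert_of_notMem (by simp)]
  · rfl

theorem sum_range_block (c L : ℕ) (F : ℕ → ℝ) :
    ∑ N ∈ Finset.range (c * L), F N
      = ∑ a ∈ Finset.range c, ∑ n ∈ Finset.range L, F (a * L + n) := by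
  induction c with
  | zero => simp
  | succ c ih => rw [Finset.sum_range_succ, ← ih, Nat.succ_mul, Finset.sum_range_add]

theorem expand_aux (b l m : ℕ) (P : ℕ → Prop) [DecidablePred P] (x : ℝ) :
    ∑ n ∈ Finset.range (b ^ l),
      (if P n then (x * (b : ℝ) ^ l + ((b : ℝ) ^ l - n)) ^ m else 0)
    = ∑ j ∈ Finset.range (m + 1), (m.choose j : ℝ) * x ^ (m - j) * ((b : ℝ) ^ l) ^ (m - j) *
        ∑ n ∈ Finset.range (b ^ l), (if P n then ((b : ℝ) ^ l - n) ^ j else 0) := by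
  simp_rw [Finset.mul_sum]
  rw [Finset.sum_comm]
  refine Finset.sum_congr rfl fun n _ => ?_
  split_ifs
  · rw [add_comm, add_pow]
    refine Finset.sum_congr rfl fun j _ => ?_
    rw [mul_pow]; ring
  · simp

theorem lvT_succ (b d k m l : ℕ) (hd : d < b) :
    lvT b d k m (l + 1) = ∑ j ∈ Finset.range (m + 1), (m.choose j : ℝ) * ((b : ℝ) ^ l) ^ (m - j) *
      (gS b d (m - j) * lvT b d k j l + ((b : ℝ) - 1 - d) ^ (m - j) * lvT' b d k j l) := by
  have key : lvT b d k m (l + 1) = ∑ a ∈ Finset.range b,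
      ∑ j ∈ Finset.range (m + 1), (m.choose j : ℝ) * ((b : ℝ) - 1 - a) ^ (m - j) *
        ((b : ℝ) ^ l) ^ (m - j) * (if a = d then lvT' b d k j l else lvT b d k j l) := by
    unfold lvT
    rw [pow_succ' b l, sum_range_block]
    refine Finset.sum_congr rfl fun a ha => ?_
    have ha' : a < b := Finset.mem_range.1 ha
    have e1 : ∀ n : ℕ, (b : ℝ) ^ (l + 1) - ((a * b ^ l + n : ℕ) : ℝ)
        = ((b : ℝ) - 1 - a) * (b : ℝ) ^ l + ((b : ℝ) ^ l - n) := by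
      intro n; push_cast; ring
    by_cases h : a = d
    · simp only [h, if_true]
      unfold lvT'
      rw [← expand_aux b l m (fun n => cntD b d l n + 1 = k) ((b : ℝ) - 1 - d)]
      refine Finset.sum_congr rfl fun n hn => ?_
      rw [← h, e1, cntD_succ b a l n a ha' (Finset.mem_range.1 hn), if_pos rfl]
    · simp only [h, if_false]
      rw [← expand_aux b l m (fun n => cntD b d l n = k) ((b : ℝ) - 1 - a)]
      refine Finset.sum_congr rfl fun n hn => ?_
      rw [e1, cntD_succ b d l n a ha' (Finset.mem_range.1 hn), if_neg h, add_zero]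
  rw [key, Finset.sum_comm]
  refine Finset.sum_congr rfl fun j _ => ?_
  rw [← Finset.add_sum_erase _ _ (Finset.mem_range.2 hd)]
  have : ∑ a ∈ (Finset.range b).erase d, (m.choose j : ℝ) * ((b : ℝ) - 1 - a) ^ (m - j) *
        ((b : ℝ) ^ l) ^ (m - j) * (if a = d then lvT' b d k j l else lvT b d k j l)
      = (m.choose j : ℝ) * ((b : ℝ) ^ l) ^ (m - j) * (gS b d (m - j) * lvT b d k j l) := by
    unfold gS
    rw [Finset.sum_mul, Finset.mul_sum]
    refine Finset.sum_congr rfl fun a ha => ?_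
    rw [if_neg (Finset.ne_of_mem_erase ha)]; ring
  rw [this, if_pos rfl]; ring

theorem lvS_succ (b d k m l : ℕ) (hd : d < b) :
    lvS b d k m (l + 1) = ((b : ℝ) ^ (m + 1))⁻¹ * ∑ j ∈ Finset.range (m + 1), (m.choose j : ℝ) *
      (gS b d (m - j) * lvS b d k j l + ((b : ℝ) - 1 - d) ^ (m - j) * lvS' b d k j l) := by
  have hb : (b : ℝ) ≠ 0 := by
    have : 0 < b := by omega
    positivity
  unfold lvS lvS'
  rw [lvT_succ b d k m l hd, Finset.mul_sum, Finset.mul_sum]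
  refine Finset.sum_congr rfl fun j hj => ?_
  have hj' : j ≤ m := by have := Finset.mem_range.1 hj; omega
  obtain ⟨i, rfl⟩ := Nat.exists_eq_add_of_le hj'
  have e : ((b : ℝ) ^ ((l + 1) * (j + i + 1)))⁻¹ * ((b : ℝ) ^ l) ^ i
      = ((b : ℝ) ^ (j + i + 1))⁻¹ * ((b : ℝ) ^ (l * (j + 1)))⁻¹ := by
    rw [← pow_mul, ← mul_inv, ← pow_add]
    have : (b : ℝ) ^ ((l + 1) * (j + i + 1))
      = (b : ℝ) ^ (j + i + 1 + l * (j + 1)) * (b : ℝ) ^ (l * i) := by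
      rw [← pow_add]; congr 1; ring
    rw [this]; field_simp
  rw [Nat.add_sub_cancel_left]
  linear_combination ((j + i).choose j : ℝ) *
    (gS b d i * lvT b d k j l + ((b : ℝ) - 1 - d) ^ i * lvT' b d k j l) * e

theorem lvT_nonneg (b d k m l : ℕ) : 0 ≤ lvT b d k m l := by
  unfold lvT
  refine Finset.sum_nonneg fun n hn => ?_
  have : (n : ℝ) ≤ (b : ℝ) ^ l := by exact_mod_cast (Finset.mem_range.1 hn).le
  split_ifs
  · exact pow_nonneg (by linarith) _
  · rfl

theorem lvS_nonneg (b d k m l : ℕ) : 0 ≤ lvS b d k m l := by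
  unfold lvS
  have := lvT_nonneg b d k m l
  positivity

theorem lvS_le (b d k m l : ℕ) (hb : 0 < b) : lvS b d k m l ≤ lvS b d k 0 l := by
  unfold lvS
  have hb' : (0 : ℝ) < b := by exact_mod_cast hb
  have e : (b : ℝ) ^ (l * (m + 1)) = (b : ℝ) ^ (l * (0 + 1)) * ((b : ℝ) ^ l) ^ m := by
    rw [← pow_mul, ← pow_add]; congr 1; ring
  rw [e, mul_inv, mul_assoc]
  refine mul_le_mul_of_nonneg_left ?_ (by positivity)
  rw [inv_mul_le_iff₀ (by positivity)]
  unfold lvT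
  rw [Finset.mul_sum]
  refine Finset.sum_le_sum fun n hn => ?_
  have : (n : ℝ) ≤ (b : ℝ) ^ l := by exact_mod_cast (Finset.mem_range.1 hn).le
  split_ifs
  · rw [pow_zero, mul_one]
    exact pow_le_pow_left₀ (by linarith) (by simp) _
  · simp

theorem lvS_zero (b d k m : ℕ) : lvS b d k m 0 = if k = 0 then 1 else 0 := by
  simp [lvS, lvT, cntD, eq_comm]

theorem gS_zero (b d : ℕ) (hd : d < b) : gS b d 0 = (b : ℝ) - 1 := by
  have : 1 ≤ b := by omega
  simp [gS, hd, Nat.cast_sub this]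

theorem partial_le (b d : ℕ) (hd : d < b) (k : ℕ) :
    ∀ N, ∑ l ∈ Finset.range N, lvS b d k 0 l ≤ b := by
  have hb' : (0 : ℝ) < b := by
    have : 0 < b := by omega
    exact_mod_cast this
  have rec0 : ∀ k N, (b : ℝ) * ∑ l ∈ Finset.range (N + 1), lvS b d k 0 l
      = b * (if k = 0 then 1 else 0) + ((b : ℝ) - 1) * ∑ l ∈ Finset.range N, lvS b d k 0 l
        + ∑ l ∈ Finset.range N, lvS' b d k 0 l := by
    intro k N
    rw [Finset.sum_range_succ', lvS_zero, mul_add, Finset.mul_sum, Finset.mul_sum]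
    have : ∀ l, (b : ℝ) * lvS b d k 0 (l + 1)
        = ((b : ℝ) - 1) * lvS b d k 0 l + lvS' b d k 0 l := by
      intro l
      rw [lvS_succ b d k 0 l hd]
      simp [gS_zero b d hd]
      field_simp
    simp_rw [this, Finset.sum_add_distrib]
    ring
  have mono : ∀ k N, ∑ l ∈ Finset.range N, lvS b d k 0 l
      ≤ ∑ l ∈ Finset.range (N + 1), lvS b d k 0 l := by
    intro k N
    rw [Finset.sum_range_succ]
    linarith [lvS_nonneg b d k 0 N]
  induction k with
  | zero =>
    intro N
    have h1 := rec0 0 N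
    have h2 := mul_le_mul_of_nonneg_left (mono 0 N) hb'.le
    simp only [lvS'_zero, if_true, Finset.sum_const_zero] at h1
    linarith
  | succ k ih =>
    intro N
    have h1 := rec0 (k + 1) N
    have h2 := mul_le_mul_of_nonneg_left (mono (k + 1) N) hb'.le
    have h3 := ih N
    simp only [lvS'_succ] at h1
    simp at h1
    linarith

theorem lvS_summable (b d k m : ℕ) (hd : d < b) : Summable (lvS b d k m) := by
  have h0 : Summable (lvS b d k 0) :=
    summable_of_sum_range_le (fun l => lvS_nonneg b d k 0 l) (partial_le b d hd k)
  exact Summable.of_nonneg_of_le (fun l => lvS_nonneg b d k m l)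
    (fun l => lvS_le b d k m l (by omega)) h0

/-- shifted moments -/
noncomputable def momentV' (b d k m : ℕ) : ℝ := ∑' l, lvS' b d k m l

theorem momentV'_zero (b d m : ℕ) : momentV' b d 0 m = 0 := by
  simp [momentV', lvS'_zero]

theorem momentV'_succ (b d k m : ℕ) : momentV' b d (k + 1) m = momentV b d k m := by
  simp [momentV', lvS'_succ, momentV_eq]

theorem lvS'_summable (b d k m : ℕ) (hd : d < b) : Summable (lvS' b d k m) := by
  cases k with
  | zero => simp [funext (lvS'_zero b d m)]
  | succ k =>
    rw [funext (lvS'_succ b d k m)]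
    exact lvS_summable b d k m hd

theorem momentV_rec (b d k m : ℕ) (hd : d < b) :
    momentV b d k m = (if k = 0 then 1 else 0) +
      ((b : ℝ) ^ (m + 1))⁻¹ * ∑ j ∈ Finset.range (m + 1), (m.choose j : ℝ) *
      (gS b d (m - j) * momentV b d k j + ((b : ℝ) - 1 - d) ^ (m - j) * momentV' b d k j) := by
  rw [momentV_eq, (lvS_summable b d k m hd).tsum_eq_zero_add, lvS_zero]
  congr 1
  simp_rw [lvS_succ b d k m _ hd]
  rw [tsum_mul_left]
  congr 1
  have hs : ∀ j ∈ Finset.range (m + 1), HasSum (fun l => (m.choose j : ℝ) *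
      (gS b d (m - j) * lvS b d k j l + ((b : ℝ) - 1 - d) ^ (m - j) * lvS' b d k j l))
      ((m.choose j : ℝ) *
      (gS b d (m - j) * momentV b d k j + ((b : ℝ) - 1 - d) ^ (m - j) * momentV' b d k j)) := by
    intro j _
    exact ((((lvS_summable b d k j hd).hasSum).mul_left _).add
      (((lvS'_summable b d k j hd).hasSum).mul_left _)).mul_left _
  exact (hasSum_sum hs).tsum_eq
theorem leb_aux (c : ℝ) (m : ℕ) :
    ∑ j ∈ Finset.range (m + 1), (m.choose j : ℝ) * c ^ (m - j) / ((j : ℝ) + 1)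
      = ((c + 1) ^ (m + 1) - c ^ (m + 1)) / ((m : ℝ) + 1) := by
  rw [eq_div_iff (by positivity), Finset.sum_mul, add_comm c 1, add_pow, Finset.sum_range_succ' _ (m + 1)]
  simp only [one_pow, one_mul, Nat.sub_zero, Nat.choose_zero_right, Nat.cast_one, mul_one,
    add_sub_cancel_right, Nat.add_sub_add_right]
  refine Finset.sum_congr rfl fun j _ => ?_
  have h : ((m : ℝ) + 1) * (m.choose j : ℝ) = ((m + 1).choose (j + 1) : ℝ) * ((j : ℝ) + 1) := by
    exact_mod_cast Nat.add_one_mul_choose_eq m j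
  field_simp
  linear_combination c ^ (m - j) * h

theorem leb_rec (b d m : ℕ) (hd : d < b) :
    ∑ j ∈ Finset.range (m + 1), (m.choose j : ℝ) *
      (gS b d (m - j) * ((b : ℝ) / ((j : ℝ) + 1))
        + ((b : ℝ) - 1 - d) ^ (m - j) * ((b : ℝ) / ((j : ℝ) + 1)))
      = (b : ℝ) ^ (m + 1) * ((b : ℝ) / ((m : ℝ) + 1)) := by
  have h1 : ∀ i, gS b d i + ((b : ℝ) - 1 - d) ^ i = ∑ a ∈ Finset.range b, (a : ℝ) ^ i := by
    intro i
    unfold gS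
    rw [Finset.sum_erase_add _ _ (Finset.mem_range.2 hd), ← Finset.sum_range_reflect]
    refine Finset.sum_congr rfl fun a ha => ?_
    have : a < b := Finset.mem_range.1 ha
    rw [Nat.sub_sub, Nat.cast_sub (by omega)]
    push_cast; ring
  have h2 : ∀ j, (m.choose j : ℝ) *
      (gS b d (m - j) * ((b : ℝ) / ((j : ℝ) + 1))
        + ((b : ℝ) - 1 - d) ^ (m - j) * ((b : ℝ) / ((j : ℝ) + 1)))
      = ∑ a ∈ Finset.range b, b * ((m.choose j : ℝ) * (a : ℝ) ^ (m - j) / ((j : ℝ) + 1)) := by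
    intro j
    rw [← add_mul, h1, Finset.sum_mul, Finset.mul_sum]
    refine Finset.sum_congr rfl fun a _ => ?_
    ring
  simp_rw [h2]
  rw [Finset.sum_comm]
  simp_rw [← Finset.mul_sum, leb_aux, ← Finset.sum_div]
  have h3 := Finset.sum_range_sub (fun a : ℕ => (a : ℝ) ^ (m + 1)) b
  push_cast at h3
  rw [h3]
  simp
  ring

/-- deviation from the Lebesgue moment -/
noncomputable def eD (d k m b : ℕ) : ℝ := momentV b d k m - (b : ℝ) / ((m : ℝ) + 1)

theorem eD_rec_succ (b d k m : ℕ) (hd : d < b) :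
    (b : ℝ) ^ (m + 1) * eD d (k + 1) m b = ∑ j ∈ Finset.range (m + 1), (m.choose j : ℝ) *
      (gS b d (m - j) * eD d (k + 1) j b + ((b : ℝ) - 1 - d) ^ (m - j) * eD d k j b) := by
  have hb : (b : ℝ) ≠ 0 := by
    have : 0 < b := by omega
    positivity
  have h := momentV_rec b d (k + 1) m hd
  simp only [momentV'_succ, Nat.add_eq_zero_iff, one_ne_zero, and_false, if_false, zero_add] at h
  have h' := leb_rec b d m hd
  unfold eD
  rw [mul_sub, h, mul_inv_cancel_left₀ (by positivity), ← h', ← Finset.sum_sub_distrib]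
  refine Finset.sum_congr rfl fun j _ => ?_
  ring

theorem eD_rec_zero (b d m : ℕ) (hd : d < b) :
    (b : ℝ) ^ (m + 1) * eD d 0 m b = (b : ℝ) ^ (m + 1) +
      ∑ j ∈ Finset.range (m + 1), (m.choose j : ℝ) *
      (gS b d (m - j) * eD d 0 j b - ((b : ℝ) - 1 - d) ^ (m - j) * ((b : ℝ) / ((j : ℝ) + 1))) := by
  have hb : (b : ℝ) ≠ 0 := by
    have : 0 < b := by omega
    positivity
  have h := momentV_rec b d 0 m hd
  simp only [momentV'_zero, if_true] at h
  have h' := leb_rec b d m hd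
  unfold eD
  rw [mul_sub, h, mul_add, mul_inv_cancel_left₀ (by positivity), ← h', mul_one, add_sub_assoc,
    ← Finset.sum_sub_distrib]
  congr 1
  refine Finset.sum_congr rfl fun j _ => ?_
  ring

theorem eD_zero (b d k : ℕ) (hd : d < b) : eD d k 0 b = 0 := by
  induction k with
  | zero =>
    have h := eD_rec_zero b d 0 hd
    simp only [zero_add, pow_one, Finset.sum_range_one, Nat.choose_self, Nat.cast_one, one_mul,
      Nat.sub_self, gS_zero b d hd, pow_zero, Nat.cast_zero, div_one] at h
    linarith
  | succ k ih =>
    have h := eD_rec_succ b d k 0 hd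
    simp only [zero_add, pow_one, Finset.sum_range_one, Nat.choose_self, Nat.cast_one, one_mul,
      Nat.sub_self, gS_zero b d hd, pow_zero, ih] at h
    linarith

/-- normalised deviation -/
noncomputable def fD (d k n b : ℕ) : ℝ := (b : ℝ) ^ (2 * k + 1) * eD d k (n + 1) b

/-- normalised power sum -/
noncomputable def GD (d i b : ℕ) : ℝ := gS b d i * (b : ℝ)⁻¹ ^ (i + 1)

/-- normalised complementary digit -/
noncomputable def DD (d b : ℕ) : ℝ := 1 - ((d : ℝ) + 1) * (b : ℝ)⁻¹

/-- diagonal coefficient -/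
noncomputable def qD (n b : ℕ) : ℝ := 1 - (b : ℝ)⁻¹ ^ (n + 1) + (b : ℝ)⁻¹ ^ (n + 2)

theorem fD_rec_succ (b d k n : ℕ) (hd : d < b) :
    qD n b * fD d (k + 1) n b =
      ∑ j ∈ Finset.range n, ((n + 1).choose (j + 1) : ℝ) *
        (GD d (n - j) b * ((b : ℝ)⁻¹ ^ (j + 1) * fD d (k + 1) j b))
      + ∑ j ∈ Finset.range (n + 1), ((n + 1).choose (j + 1) : ℝ) *
        (DD d b ^ (n - j) * ((b : ℝ)⁻¹ ^ j * fD d k j b)) := by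
  have hb : (b : ℝ) ≠ 0 := by
    have : 0 < b := by omega
    positivity
  have h := eD_rec_succ b d k (n + 1) hd
  rw [Finset.sum_range_succ', eD_zero b d _ hd, eD_zero b d _ hd] at h
  simp only [mul_zero, add_zero, Nat.add_sub_add_right, mul_add, Finset.sum_add_distrib] at h
  rw [Finset.sum_range_succ] at h
  simp only [Nat.choose_self, Nat.cast_one, one_mul, Nat.sub_self, gS_zero b d hd] at h
  have e1 : ∑ j ∈ Finset.range n, ((n + 1).choose (j + 1) : ℝ) *
        (GD d (n - j) b * ((b : ℝ)⁻¹ ^ (j + 1) * fD d (k + 1) j b))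
      = (b : ℝ) ^ (2 * k + 3) * (b : ℝ)⁻¹ ^ (n + 2) * ∑ j ∈ Finset.range n,
        ((n + 1).choose (j + 1) : ℝ) * (gS b d (n - j) * eD d (k + 1) (j + 1) b) := by
    rw [Finset.mul_sum]
    refine Finset.sum_congr rfl fun j hj => ?_
    obtain ⟨i, rfl⟩ := Nat.exists_eq_add_of_lt (Finset.mem_range.1 hj)
    have : j + i + 1 - j = i + 1 := by omega
    rw [this]
    unfold GD fD
    ring
  have e2 : ∑ j ∈ Finset.range (n + 1), ((n + 1).choose (j + 1) : ℝ) *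
        (DD d b ^ (n - j) * ((b : ℝ)⁻¹ ^ j * fD d k j b))
      = (b : ℝ) ^ (2 * k + 3) * (b : ℝ)⁻¹ ^ (n + 2) * ∑ j ∈ Finset.range (n + 1),
        ((n + 1).choose (j + 1) : ℝ) * (((b : ℝ) - 1 - d) ^ (n - j) * eD d k (j + 1) b) := by
    rw [Finset.mul_sum]
    refine Finset.sum_congr rfl fun j hj => ?_
    have hj' : j ≤ n := by have := Finset.mem_range.1 hj; omega
    obtain ⟨i, rfl⟩ := Nat.exists_eq_add_of_le hj'
    rw [Nat.add_sub_cancel_left]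
    have : DD d b = ((b : ℝ) - 1 - d) * (b : ℝ)⁻¹ := by unfold DD; field_simp; ring
    rw [this]
    unfold fD
    have h3 : (b : ℝ) ^ (2 * k + 3) * (b : ℝ)⁻¹ ^ (j + i + 2)
      = (b : ℝ)⁻¹ ^ i * (b : ℝ)⁻¹ ^ j * (b : ℝ) ^ (2 * k + 1) := by
      simp only [inv_pow]; field_simp; ring
    rw [mul_pow]
    linear_combination (-((j + i + 1).choose (j + 1) : ℝ) *
      (((b : ℝ) - 1 - d) ^ i * eD d k (j + 1) b)) * h3
  rw [e1, e2]
  have e3 : qD n b * fD d (k + 1) n b = (b : ℝ) ^ (2 * k + 3) * (b : ℝ)⁻¹ ^ (n + 2) *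
      ((b : ℝ) ^ (n + 1 + 1) * eD d (k + 1) (n + 1) b - ((b : ℝ) - 1) * eD d (k + 1) (n + 1) b) := by
    unfold qD fD
    simp only [inv_pow]; field_simp; ring
  rw [e3, h]
  ring

theorem fD_rec_zero (b d n : ℕ) (hd : d < b) :
    qD n b * fD d 0 n b =
      ∑ j ∈ Finset.range n, ((n + 1).choose (j + 1) : ℝ) *
        (GD d (n - j) b * ((b : ℝ)⁻¹ ^ (j + 1) * fD d 0 j b))
      + (((d : ℝ) + 1) * ∑ i ∈ Finset.range (n + 1), DD d b ^ i
      + ∑ j ∈ Finset.range (n + 1), ((n + 1).choose (j + 1) : ℝ) *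
        (DD d b ^ (n - j) * ((b : ℝ)⁻¹ ^ j * (-1 / ((j : ℝ) + 2))))) := by
  have hb : (b : ℝ) ≠ 0 := by
    have : 0 < b := by omega
    positivity
  have hDD : DD d b = ((b : ℝ) - 1 - d) * (b : ℝ)⁻¹ := by unfold DD; field_simp; ring
  have h := eD_rec_zero b d (n + 1) hd
  rw [Finset.sum_range_succ', eD_zero b d _ hd] at h
  simp only [mul_zero, Nat.add_sub_add_right, mul_sub, Finset.sum_sub_distrib] at h
  rw [Finset.sum_range_succ] at h
  simp only [Nat.choose_self, Nat.cast_one, one_mul, Nat.sub_self, gS_zero b d hd,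
    Nat.choose_zero_right, Nat.sub_zero, Nat.cast_zero, zero_add, div_one, zero_sub] at h
  have e1 : ∑ j ∈ Finset.range n, ((n + 1).choose (j + 1) : ℝ) *
        (GD d (n - j) b * ((b : ℝ)⁻¹ ^ (j + 1) * fD d 0 j b))
      = (b : ℝ) * (b : ℝ)⁻¹ ^ (n + 2) * ∑ j ∈ Finset.range n,
        ((n + 1).choose (j + 1) : ℝ) * (gS b d (n - j) * eD d 0 (j + 1) b) := by
    rw [Finset.mul_sum]
    refine Finset.sum_congr rfl fun j hj => ?_
    obtain ⟨i, rfl⟩ := Nat.exists_eq_add_of_lt (Finset.mem_range.1 hj)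
    have : j + i + 1 - j = i + 1 := by omega
    rw [this]
    unfold GD fD
    ring
  have e2 : ∑ j ∈ Finset.range (n + 1), ((n + 1).choose (j + 1) : ℝ) *
        (DD d b ^ (n - j) * ((b : ℝ)⁻¹ ^ j * (-1 / ((j : ℝ) + 2))))
      = - ((b : ℝ) * (b : ℝ)⁻¹ ^ (n + 2) * ∑ j ∈ Finset.range (n + 1),
        ((n + 1).choose (j + 1) : ℝ) * (((b : ℝ) - 1 - d) ^ (n - j) *
          ((b : ℝ) / (((j + 1 : ℕ) : ℝ) + 1)))) := by
    rw [Finset.mul_sum, ← Finset.sum_neg_distrib]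
    refine Finset.sum_congr rfl fun j hj => ?_
    have hj' : j ≤ n := by have := Finset.mem_range.1 hj; omega
    obtain ⟨i, rfl⟩ := Nat.exists_eq_add_of_le hj'
    rw [Nat.add_sub_cancel_left, hDD]
    have h3 : (b : ℝ) * (b : ℝ)⁻¹ ^ (j + i + 2) * b
      = (b : ℝ)⁻¹ ^ i * (b : ℝ)⁻¹ ^ j := by
      simp only [inv_pow]; field_simp; ring
    have h4 : (((j + 1 : ℕ) : ℝ) + 1) = (j : ℝ) + 2 := by push_cast; ring
    rw [mul_pow, h4]
    linear_combination (((j + i + 1).choose (j + 1) : ℝ) *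
      (((b : ℝ) - 1 - d) ^ i) / ((j : ℝ) + 2)) * h3
  have e4 : ((d : ℝ) + 1) * ∑ i ∈ Finset.range (n + 1), DD d b ^ i
      = b * (1 - DD d b ^ (n + 1)) := by
    have := mul_neg_geom_sum (DD d b) (n + 1)
    rw [← this]
    have : (1 - DD d b) * b = d + 1 := by unfold DD; field_simp; ring
    rw [← this]; ring
  rw [e1, e2, e4, hDD]
  have e3 : qD n b * fD d 0 n b = (b : ℝ) * (b : ℝ)⁻¹ ^ (n + 2) *
      ((b : ℝ) ^ (n + 1 + 1) * eD d 0 (n + 1) b - ((b : ℝ) - 1) * eD d 0 (n + 1) b) := by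
    unfold qD fD
    simp only [inv_pow]; field_simp; ring
  have e5 : b * (1 - (((b : ℝ) - 1 - d) * (b : ℝ)⁻¹) ^ (n + 1))
      = (b : ℝ) * (b : ℝ)⁻¹ ^ (n + 2) *
        ((b : ℝ) ^ (n + 1 + 1) - ((b : ℝ) - 1 - d) ^ (n + 1) * b) := by
    rw [mul_pow]
    simp only [inv_pow]; field_simp; ring
  rw [e3, h, e5]
  ring
/-- first order expansion -/
def Ex1 (F : ℕ → ℝ) (a : ℝ) : Prop :=
  (fun b : ℕ => F b - a) =O[atTop] fun b : ℕ => (b : ℝ)⁻¹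

/-- second order expansion -/
def Ex2 (F : ℕ → ℝ) (a c : ℝ) : Prop :=
  (fun b : ℕ => F b - (a + c * (b : ℝ)⁻¹)) =O[atTop] fun b : ℕ => (b : ℝ)⁻¹ ^ 2

theorem u_tendsto : Tendsto (fun b : ℕ => (b : ℝ)⁻¹) atTop (nhds 0) :=
  tendsto_inv_atTop_nhds_zero_nat

theorem u_bdd : (fun b : ℕ => (b : ℝ)⁻¹) =O[atTop] fun _ : ℕ => (1 : ℝ) :=
  u_tendsto.isBigO_one ℝ

theorem u2_u : (fun b : ℕ => (b : ℝ)⁻¹ ^ 2) =O[atTop] fun b : ℕ => (b : ℝ)⁻¹ := by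
  have := u_bdd.mul (isBigO_refl (fun b : ℕ => (b : ℝ)⁻¹) atTop)
  simpa [sq] using this

theorem Ex1.tendsto {F : ℕ → ℝ} {a : ℝ} (h : Ex1 F a) : Tendsto F atTop (nhds a) := by
  have h1 := IsBigO.trans_tendsto h u_tendsto
  simpa using h1.add_const a

theorem Ex1.bdd {F : ℕ → ℝ} {a : ℝ} (h : Ex1 F a) : F =O[atTop] fun _ : ℕ => (1 : ℝ) :=
  h.tendsto.isBigO_one ℝ

theorem Ex2.ex1 {F : ℕ → ℝ} {a c : ℝ} (h : Ex2 F a c) : Ex1 F a := by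
  have h1 := (IsBigO.trans h u2_u).add
    ((isBigO_refl (fun b : ℕ => (b : ℝ)⁻¹) atTop).const_mul_left c)
  refine h1.congr_left fun b => ?_
  ring

theorem Ex1.congr {F G : ℕ → ℝ} {a : ℝ} (h : Ex1 F a) (e : F =ᶠ[atTop] G) : Ex1 G a := by
  refine IsBigO.congr' h ?_ EventuallyEq.rfl
  filter_upwards [e] with b hb
  rw [hb]

theorem Ex2.congr {F G : ℕ → ℝ} {a c : ℝ} (h : Ex2 F a c) (e : F =ᶠ[atTop] G) : Ex2 G a c := by
  refine IsBigO.congr' h ?_ EventuallyEq.rfl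
  filter_upwards [e] with b hb
  rw [hb]

theorem Ex2.const (a : ℝ) : Ex2 (fun _ => a) a 0 := by
  unfold Ex2
  simpa using isBigO_zero _ _

theorem Ex1.const (a : ℝ) : Ex1 (fun _ => a) a := (Ex2.const a).ex1

theorem Ex1.add {F G : ℕ → ℝ} {a a' : ℝ} (h : Ex1 F a) (h' : Ex1 G a') :
    Ex1 (fun b => F b + G b) (a + a') :=
  (IsBigO.add h h').congr_left fun b => by ring

theorem Ex2.add {F G : ℕ → ℝ} {a a' c c' : ℝ} (h : Ex2 F a c) (h' : Ex2 G a' c') :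
    Ex2 (fun b => F b + G b) (a + a') (c + c') :=
  (IsBigO.add h h').congr_left fun b => by ring

theorem Ex1.mul {F G : ℕ → ℝ} {a a' : ℝ} (h : Ex1 F a) (h' : Ex1 G a') :
    Ex1 (fun b => F b * G b) (a * a') := by
  have h1 := IsBigO.mul h h'.bdd
  have h2 := IsBigO.const_mul_left h' a
  simp only [mul_one] at h1
  exact (h1.add h2).congr_left fun b => by ring

theorem Ex2.mul {F G : ℕ → ℝ} {a a' c c' : ℝ} (h : Ex2 F a c) (h' : Ex2 G a' c') :
    Ex2 (fun b => F b * G b) (a * a') (a * c' + c * a') := by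
  have h1 := IsBigO.mul h h'.ex1.bdd
  have h2 := IsBigO.const_mul_left h' a
  have h3 := (IsBigO.mul (isBigO_refl (fun b : ℕ => (b : ℝ)⁻¹) atTop) h'.ex1).const_mul_left c
  simp only [mul_one, ← sq] at h1 h3
  exact ((h1.add h2).add h3).congr_left fun b => by ring

theorem Ex1.sum {F : ℕ → ℕ → ℝ} {a : ℕ → ℝ} (s : Finset ℕ) (h : ∀ j ∈ s, Ex1 (F j) (a j)) :
    Ex1 (fun b => ∑ j ∈ s, F j b) (∑ j ∈ s, a j) := by
  unfold Ex1
  simp only [← Finset.sum_sub_distrib]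
  exact IsBigO.fun_sum h

theorem Ex2.sum {F : ℕ → ℕ → ℝ} {a c : ℕ → ℝ} (s : Finset ℕ)
    (h : ∀ j ∈ s, Ex2 (F j) (a j) (c j)) :
    Ex2 (fun b => ∑ j ∈ s, F j b) (∑ j ∈ s, a j) (∑ j ∈ s, c j) := by
  unfold Ex2
  simp only [Finset.sum_mul, ← Finset.sum_add_distrib, ← Finset.sum_sub_distrib]
  exact IsBigO.fun_sum h

theorem Ex2.u : Ex2 (fun b : ℕ => (b : ℝ)⁻¹) 0 1 := by
  unfold Ex2
  simpa using isBigO_zero _ _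

theorem Ex1.u_mul {F : ℕ → ℝ} {a : ℝ} (h : Ex1 F a) :
    Ex2 (fun b : ℕ => (b : ℝ)⁻¹ * F b) 0 a := by
  have h1 := IsBigO.mul (isBigO_refl (fun b : ℕ => (b : ℝ)⁻¹) atTop) h
  simp only [← sq] at h1
  exact h1.congr_left fun b => by ring

theorem Ex2.u_pow (n : ℕ) : Ex2 (fun b : ℕ => (b : ℝ)⁻¹ ^ (n + 2)) 0 0 := by
  induction n with
  | zero =>
    unfold Ex2
    simpa using isBigO_refl _ _
  | succ n ih =>
    have := Ex2.mul ih Ex2.u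
    simp only [mul_zero, zero_mul, add_zero] at this
    exact this

theorem Ex1.u_pow_succ (n : ℕ) : Ex1 (fun b : ℕ => (b : ℝ)⁻¹ ^ (n + 1)) 0 := by
  cases n with
  | zero => simpa using Ex2.u.ex1
  | succ n => exact (Ex2.u_pow n).ex1

theorem Ex2.pow {F : ℕ → ℝ} {c : ℝ} (h : Ex2 F 1 c) (n : ℕ) :
    Ex2 (fun b => F b ^ n) 1 (n * c) := by
  induction n with
  | zero => simpa using Ex2.const 1
  | succ n ih =>
    have := ih.mul h
    simp only [pow_succ]
    convert this using 1
    · ring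
    · push_cast; ring

theorem div_gen {q F h w : ℕ → ℝ} (hq : Tendsto q atTop (nhds 1))
    (H : (fun b => q b * (F b - h b)) =O[atTop] w) :
    (fun b => F b - h b) =O[atTop] w := by
  have h1 := (hq.inv₀ one_ne_zero).isBigO_one ℝ
  have h2 := h1.mul H
  simp only [one_mul] at h2
  refine h2.congr' ?_ EventuallyEq.rfl
  filter_upwards [hq.eventually_ne one_ne_zero] with b hb
  rw [inv_mul_cancel_left₀ hb]

theorem Ex1.div {q F : ℕ → ℝ} {a : ℝ} (hq : Ex1 q 1) (H : Ex1 (fun b => q b * F b) a) :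
    Ex1 F a := by
  refine div_gen hq.tendsto ?_
  have h1 := hq.mul (Ex1.const a)
  exact (IsBigO.sub H h1).congr_left fun b => by ring

theorem Ex2.div {q F : ℕ → ℝ} {a c e : ℝ} (hq : Ex2 q 1 e)
    (H : Ex2 (fun b => q b * F b) a c) : Ex2 F a (c - e * a) := by
  refine div_gen hq.ex1.tendsto ?_
  have h1 := hq.mul ((Ex2.const a).add ((Ex2.const (c - e * a)).mul Ex2.u))
  exact (IsBigO.sub H h1).congr_left fun b => by ring

theorem DD_ex2 (d : ℕ) : Ex2 (DD d) 1 (-((d : ℝ) + 1)) := by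
  have := (Ex2.const 1).add ((Ex2.const (-((d : ℝ) + 1))).mul Ex2.u)
  simp only [mul_zero, add_zero, mul_one, zero_add, zero_mul] at this
  refine this.congr (Eventually.of_forall fun b => ?_)
  unfold DD; ring

theorem DD_pow_ex1 (d n : ℕ) : Ex1 (fun b => DD d b ^ n) 1 := ((DD_ex2 d).pow n).ex1

theorem qD_ex2_zero : Ex2 (qD 0) 1 (-1) := by
  have := ((Ex2.const 1).add ((Ex2.const (-1)).mul Ex2.u)).add (Ex2.u_pow 0)
  simp only [mul_zero, add_zero, mul_one, zero_add, zero_mul] at this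
  refine this.congr (Eventually.of_forall fun b => ?_)
  unfold qD; ring

theorem qD_ex2_succ (n : ℕ) : Ex2 (qD (n + 1)) 1 0 := by
  have := ((Ex2.const 1).add ((Ex2.const (-1)).mul (Ex2.u_pow n))).add (Ex2.u_pow (n + 1))
  simp only [mul_zero, add_zero, zero_mul] at this
  refine this.congr (Eventually.of_forall fun b => ?_)
  unfold qD; ring

theorem qD_ex1 (n : ℕ) : Ex1 (qD n) 1 := by
  cases n with
  | zero => exact qD_ex2_zero.ex1
  | succ n => exact (qD_ex2_succ n).ex1

theorem pow_step (i : ℕ) (x : ℝ) (hx : 0 ≤ x) :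
    ((i : ℝ) + 1) * x ^ i ≤ (x + 1) ^ (i + 1) - x ^ (i + 1) ∧
    (x + 1) ^ (i + 1) - x ^ (i + 1) ≤ ((i : ℝ) + 1) * (x + 1) ^ i := by
  induction i with
  | zero => simp
  | succ i ih =>
    obtain ⟨h1, h2⟩ := ih
    have e : x ^ (i + 1) ≤ (x + 1) ^ (i + 1) := pow_le_pow_left₀ hx (by linarith) _
    have e1 : (x + 1) ^ (i + 1 + 1) - x ^ (i + 1 + 1)
      = x * ((x + 1) ^ (i + 1) - x ^ (i + 1)) + (x + 1) ^ (i + 1) := by ring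
    have e2 : (x + 1) ^ (i + 1 + 1) - x ^ (i + 1 + 1)
      = (x + 1) * ((x + 1) ^ (i + 1) - x ^ (i + 1)) + x ^ (i + 1) := by ring
    push_cast
    constructor
    · rw [e1]
      have := mul_le_mul_of_nonneg_left h1 hx
      have e3 : x * (((i : ℝ) + 1) * x ^ i) = ((i : ℝ) + 1) * x ^ (i + 1) := by ring
      linarith
    · rw [e2]
      have := mul_le_mul_of_nonneg_left h2 (by linarith : 0 ≤ x + 1)
      have e3 : (x + 1) * (((i : ℝ) + 1) * (x + 1) ^ i) = ((i : ℝ) + 1) * (x + 1) ^ (i + 1) := by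
        ring
      linarith

theorem powsum_bd (i b : ℕ) (hi : 1 ≤ i) :
    ((i : ℝ) + 1) * ∑ a ∈ Finset.range b, (a : ℝ) ^ i ≤ (b : ℝ) ^ (i + 1) ∧
    (b : ℝ) ^ (i + 1) ≤ ((i : ℝ) + 1) * (∑ a ∈ Finset.range b, (a : ℝ) ^ i + (b : ℝ) ^ i) := by
  induction b with
  | zero => simp [show i ≠ 0 by omega]
  | succ b ih =>
    obtain ⟨h1, h2⟩ := ih
    obtain ⟨h3, h4⟩ := pow_step i b (by positivity)
    rw [Finset.sum_range_succ]
    push_cast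
    constructor <;> nlinarith

theorem GD_ex1 (d i : ℕ) (hi : 1 ≤ i) : Ex1 (GD d i) (1 / ((i : ℝ) + 1)) := by
  refine IsBigO.of_bound 2 ?_
  filter_upwards [eventually_gt_atTop d] with b hd
  have hb : (0 : ℝ) < b := by
    have : 0 < b := by omega
    exact_mod_cast this
  have h1 : gS b d i + ((b : ℝ) - 1 - d) ^ i = ∑ a ∈ Finset.range b, (a : ℝ) ^ i := by
    unfold gS
    rw [Finset.sum_erase_add _ _ (Finset.mem_range.2 hd), ← Finset.sum_range_reflect]
    refine Finset.sum_congr rfl fun a ha => ?_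
    have : a < b := Finset.mem_range.1 ha
    rw [Nat.sub_sub, Nat.cast_sub (by omega)]
    push_cast; ring
  obtain ⟨h2, h3⟩ := powsum_bd i b hi
  have hd' : (d : ℝ) + 1 ≤ b := by exact_mod_cast hd
  have h4 : 0 ≤ ((b : ℝ) - 1 - d) ^ i := pow_nonneg (by linarith) _
  have h5 : ((b : ℝ) - 1 - d) ^ i ≤ (b : ℝ) ^ i :=
    pow_le_pow_left₀ (by linarith) (by have : (0 : ℝ) ≤ d := by positivity
                                       linarith) _
  have hi' : (0 : ℝ) < (i : ℝ) + 1 := by positivity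
  have e1 : GD d i b - 1 / ((i : ℝ) + 1)
      = (((i : ℝ) + 1) * gS b d i - (b : ℝ) ^ (i + 1)) / (((i : ℝ) + 1) * (b : ℝ) ^ (i + 1)) := by
    unfold GD
    simp only [inv_pow]; field_simp
  have e2 : 2 * (b : ℝ)⁻¹ = 2 * (((i : ℝ) + 1) * (b : ℝ) ^ i) / (((i : ℝ) + 1) * (b : ℝ) ^ (i + 1)) := by
    field_simp
    ring
  have h6 : 0 ≤ (b : ℝ) ^ i := by positivity
  rw [e1, Real.norm_eq_abs, Real.norm_eq_abs, abs_of_pos (inv_pos.2 hb), e2, abs_div,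
    abs_of_pos (by positivity : 0 < ((i : ℝ) + 1) * (b : ℝ) ^ (i + 1))]
  refine div_le_div_of_nonneg_right ?_ (by positivity)
  have h7 : gS b d i = ∑ a ∈ Finset.range b, (a : ℝ) ^ i - ((b : ℝ) - 1 - d) ^ i := by linarith
  have h8 := mul_le_mul_of_nonneg_left h5 hi'.le
  have h9 := mul_nonneg hi'.le h4
  have h10 := mul_nonneg hi'.le h6
  rw [h7, abs_le]
  constructor <;> nlinarith
theorem firstSum_ex1 (d k n : ℕ) (ih : ∀ j < n, ∃ a, Ex1 (fD d k j) a) :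
    Ex1 (fun b : ℕ => ∑ j ∈ Finset.range n, ((n + 1).choose (j + 1) : ℝ) *
        (GD d (n - j) b * ((b : ℝ)⁻¹ ^ (j + 1) * fD d k j b))) 0 := by
  have := Ex1.sum (F := fun j b => ((n + 1).choose (j + 1) : ℝ) *
        (GD d (n - j) b * ((b : ℝ)⁻¹ ^ (j + 1) * fD d k j b))) (a := fun _ => 0)
        (Finset.range n) (fun j hj => by
    have hj' := Finset.mem_range.1 hj
    obtain ⟨a, ha⟩ := ih j hj'
    have := (Ex1.const ((n + 1).choose (j + 1) : ℝ)).mul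
      ((GD_ex1 d (n - j) (by omega)).mul ((Ex1.u_pow_succ j).mul ha))
    simp only [zero_mul, mul_zero] at this
    exact this)
  simpa using this

theorem secondSum_ex1 (d n : ℕ) (F : ℕ → ℕ → ℝ) (a : ℕ → ℝ) (hF : ∀ j, Ex1 (F j) (a j)) :
    Ex1 (fun b : ℕ => ∑ j ∈ Finset.range (n + 1), ((n + 1).choose (j + 1) : ℝ) *
        (DD d b ^ (n - j) * ((b : ℝ)⁻¹ ^ j * F j b))) (((n : ℝ) + 1) * a 0) := by
  have h1 := Ex1.sum (F := fun j b => ((n + 1).choose (j + 1 + 1) : ℝ) *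
        (DD d b ^ (n - (j + 1)) * ((b : ℝ)⁻¹ ^ (j + 1) * F (j + 1) b))) (a := fun _ => 0)
        (Finset.range n) (fun j hj => by
    have := (Ex1.const ((n + 1).choose (j + 1 + 1) : ℝ)).mul
      ((DD_pow_ex1 d (n - (j + 1))).mul ((Ex1.u_pow_succ j).mul (hF (j + 1))))
    simp only [zero_mul, mul_zero] at this
    exact this)
  have h2 := (Ex1.const ((n : ℝ) + 1)).mul ((DD_pow_ex1 d n).mul (hF 0))
  have h3 := h1.add h2
  simp only [Finset.sum_const_zero, zero_add, one_mul] at h3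
  refine h3.congr (Eventually.of_forall fun b => ?_)
  simp only [Finset.sum_range_succ' _ n]
  simp

theorem fD_ex1 (d k : ℕ) : ∀ n, Ex1 (fD d k n) (((n : ℝ) + 1) * ((d : ℝ) + 1 / 2)) := by
  induction k with
  | zero =>
    intro n
    induction n using Nat.strong_induction_on with
    | _ n ih =>
      refine Ex1.div (qD_ex1 n) ?_
      have h1 := firstSum_ex1 d 0 n (fun j hj => ⟨_, ih j hj⟩)
      have h2 := secondSum_ex1 d n (fun j _ => -1 / ((j : ℝ) + 2)) (fun j => -1 / ((j : ℝ) + 2))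
        (fun j => Ex1.const _)
      have h3 := (Ex1.const ((d : ℝ) + 1)).mul
        (Ex1.sum (Finset.range (n + 1)) (fun i _ => DD_pow_ex1 d i))
      have h4 := h1.add (h3.add h2)
      have e : (0 : ℝ) + (((d : ℝ) + 1) * ∑ i ∈ Finset.range (n + 1), (1 : ℝ)
        + ((n : ℝ) + 1) * (-1 / (((0 : ℕ) : ℝ) + 2))) = ((n : ℝ) + 1) * ((d : ℝ) + 1 / 2) := by
        simp; ring
      rw [e] at h4
      refine h4.congr ?_
      filter_upwards [eventually_gt_atTop d] with b hd
      exact (fD_rec_zero b d n hd).symm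
  | succ k ihk =>
    intro n
    induction n using Nat.strong_induction_on with
    | _ n ih =>
      refine Ex1.div (qD_ex1 n) ?_
      have h1 := firstSum_ex1 d (k + 1) n (fun j hj => ⟨_, ih j hj⟩)
      have h2 := secondSum_ex1 d n (fD d k) _ ihk
      have h4 := h1.add h2
      have e : (0 : ℝ) + ((n : ℝ) + 1) * ((((0 : ℕ) : ℝ) + 1) * ((d : ℝ) + 1 / 2))
        = ((n : ℝ) + 1) * ((d : ℝ) + 1 / 2) := by
        simp
      rw [e] at h4
      refine h4.congr ?_
      filter_upwards [eventually_gt_atTop d] with b hd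
      exact (fD_rec_succ b d k n hd).symm

theorem fD_ex2_zero (d k : ℕ) :
    Ex2 (fD d k 0) ((d : ℝ) + 1 / 2) (((k : ℝ) + 1) * ((d : ℝ) + 1 / 2)) := by
  induction k with
  | zero =>
    have h : Ex2 (fun b => qD 0 b * fD d 0 0 b) ((d : ℝ) + 1 / 2) 0 := by
      refine (Ex2.const ((d : ℝ) + 1 / 2)).congr ?_
      filter_upwards [eventually_gt_atTop d] with b hd
      rw [fD_rec_zero b d 0 hd]
      simp; ring
    convert Ex2.div qD_ex2_zero h using 1
    simp
  | succ k ih =>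
    have h : Ex2 (fun b => qD 0 b * fD d (k + 1) 0 b) ((d : ℝ) + 1 / 2)
        (((k : ℝ) + 1) * ((d : ℝ) + 1 / 2)) := by
      refine ih.congr ?_
      filter_upwards [eventually_gt_atTop d] with b hd
      rw [fD_rec_succ b d k 0 hd]
      simp
    convert Ex2.div qD_ex2_zero h using 1
    push_cast; ring

theorem ex2_tail {F : ℕ → ℝ} {a : ℝ} (j : ℕ) (h : Ex1 F a) :
    Ex2 (fun b : ℕ => (b : ℝ)⁻¹ ^ (j + 2) * F b) 0 0 := by
  have := ((Ex1.u_pow_succ j).mul h).u_mul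
  rw [zero_mul] at this
  exact this.congr (Eventually.of_forall fun b => by ring)

theorem choose_two_real (n : ℕ) : ((n + 2).choose 2 : ℝ) * 2 = ((n : ℝ) + 2) * ((n : ℝ) + 1) := by
  have := Nat.add_one_mul_choose_eq (n + 1) 1
  simp at this
  have h : ((n : ℝ) + 1 + 1) * ((n : ℝ) + 1) = ((n + 2).choose 2 : ℝ) * 2 := by
    exact_mod_cast this
  rw [← h]; ring

theorem fD_ex2_succ (d k n : ℕ) :
    Ex2 (fD d (k + 1) (n + 1)) (((n : ℝ) + 2) * ((d : ℝ) + 1 / 2))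
      (((d : ℝ) + 1 / 2) * (1 + ((n : ℝ) + 2) * ((k : ℝ) + 1)
        - ((n : ℝ) + 2) * ((n : ℝ) + 1) * d)) := by
  set A : ℝ := (d : ℝ) + 1 / 2 with hA
  -- first sum
  have a1 : Ex2 (fun b : ℕ => ∑ j ∈ Finset.range (n + 1), ((n + 1 + 1).choose (j + 1) : ℝ) *
        (GD d (n + 1 - j) b * ((b : ℝ)⁻¹ ^ (j + 1) * fD d (k + 1) j b))) 0 A := by
    have t1 := Ex2.sum (F := fun j b => ((n + 1 + 1).choose (j + 1 + 1) : ℝ) *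
        (GD d (n + 1 - (j + 1)) b * ((b : ℝ)⁻¹ ^ (j + 1 + 1) * fD d (k + 1) (j + 1) b)))
        (a := fun _ => 0) (c := fun _ => 0) (Finset.range n) (fun j hj => by
      have hj' := Finset.mem_range.1 hj
      have := ex2_tail j ((Ex1.const ((n + 1 + 1).choose (j + 1 + 1) : ℝ)).mul
        ((GD_ex1 d (n + 1 - (j + 1)) (by omega)).mul (fD_ex1 d (k + 1) (j + 1))))
      exact this.congr (Eventually.of_forall fun b => by ring))
    have t2 := ((Ex1.const ((n : ℝ) + 2)).mul
      ((GD_ex1 d (n + 1) (by omega)).mul (fD_ex1 d (k + 1) 0))).u_mul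
    have t3 := t1.add t2
    have e : ∑ j ∈ Finset.range n, (0 : ℝ) + ((n : ℝ) + 2) * (1 / (((n + 1 : ℕ) : ℝ) + 1) *
        ((((0 : ℕ) : ℝ) + 1) * ((d : ℝ) + 1 / 2))) = A := by
      have : ((n + 1 : ℕ) : ℝ) + 1 = (n : ℝ) + 2 := by push_cast; ring
      rw [this, hA]; simp; field_simp
    rw [e] at t3
    simp only [Finset.sum_const_zero, add_zero] at t3
    refine t3.congr (Eventually.of_forall fun b => ?_)
    simp only [Finset.sum_range_succ' _ n]
    simp; ring
  -- second sum
  have a2 : Ex2 (fun b : ℕ => ∑ j ∈ Finset.range (n + 1 + 1), ((n + 1 + 1).choose (j + 1) : ℝ) *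
        (DD d b ^ (n + 1 - j) * ((b : ℝ)⁻¹ ^ j * fD d k j b))) (((n : ℝ) + 2) * A)
        (A * (((n : ℝ) + 2) * ((k : ℝ) + 1) - ((n : ℝ) + 2) * ((n : ℝ) + 1) * d)) := by
    have t1 := Ex2.sum (F := fun j b => ((n + 1 + 1).choose (j + 1 + 1 + 1) : ℝ) *
        (DD d b ^ (n + 1 - (j + 1 + 1)) * ((b : ℝ)⁻¹ ^ (j + 1 + 1) * fD d k (j + 1 + 1) b)))
        (a := fun _ => 0) (c := fun _ => 0) (Finset.range n) (fun j hj => by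
      have := ex2_tail j ((Ex1.const ((n + 1 + 1).choose (j + 1 + 1 + 1) : ℝ)).mul
        ((DD_pow_ex1 d (n + 1 - (j + 1 + 1))).mul (fD_ex1 d k (j + 1 + 1))))
      exact this.congr (Eventually.of_forall fun b => by ring))
    have t2 := ((Ex1.const ((n + 2).choose 2 : ℝ)).mul
      ((DD_pow_ex1 d n).mul (fD_ex1 d k 1))).u_mul
    have t3 := (Ex2.const ((n : ℝ) + 2)).mul (((DD_ex2 d).pow (n + 1)).mul (fD_ex2_zero d k))
    have t4 := (t1.add t2).add t3
    simp only [Finset.sum_const_zero] at t4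
    have t5 := t4.congr (G := fun b : ℕ => ∑ j ∈ Finset.range (n + 1 + 1),
        ((n + 1 + 1).choose (j + 1) : ℝ) *
        (DD d b ^ (n + 1 - j) * ((b : ℝ)⁻¹ ^ j * fD d k j b)))
        (Eventually.of_forall fun b => by
          simp only [Finset.sum_range_succ' _ (n + 1), Finset.sum_range_succ' _ n]
          simp; ring)
    convert t5 using 1
    · rw [hA]; ring
    · have := choose_two_real n
      push_cast
      rw [hA]
      linear_combination (-((d : ℝ) + 1 / 2)) * this
  have h : Ex2 (fun b => qD (n + 1) b * fD d (k + 1) (n + 1) b)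
      (0 + ((n : ℝ) + 2) * A)
      (A + A * (((n : ℝ) + 2) * ((k : ℝ) + 1) - ((n : ℝ) + 2) * ((n : ℝ) + 1) * d)) := by
    refine (a1.add a2).congr ?_
    filter_upwards [eventually_gt_atTop d] with b hd
    exact (fD_rec_succ b d k (n + 1) hd).symm
  convert Ex2.div (qD_ex2_succ n) h using 1
  · ring
  · ring

theorem fD_final (d k n : ℕ) (hk : 1 ≤ k) :
    Ex2 (fD d k n) (((n : ℝ) + 1) * ((d : ℝ) + 1 / 2))
      (((d : ℝ) + 1 / 2) * (1 + ((n : ℝ) + 1) * k - ((n : ℝ) + 1) * n * d)) := by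
  cases n with
  | zero =>
    convert fD_ex2_zero d k using 1
    · simp
    · simp; ring
  | succ n =>
    obtain ⟨k, rfl⟩ := Nat.exists_eq_add_of_le' hk
    convert fD_ex2_succ d k n using 1
    · push_cast; ring
    · push_cast; ring

theorem momentV_k_asymptotic (d k m : ℕ) (hk : 1 ≤ k) (hm : 1 ≤ m) :
    (fun b : ℕ => momentV b d k m -
      ((b : ℝ) / ((m : ℝ) + 1) + ((d : ℝ) + 1 / 2) * m / (b : ℝ) ^ (2 * k + 1)
        + ((d : ℝ) + 1 / 2) * (1 + (m : ℝ) * k - (m : ℝ) * ((m : ℝ) - 1) * d)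
          / (b : ℝ) ^ (2 * k + 2)))
      =O[atTop] fun b : ℕ => ((b : ℝ) ^ (2 * k + 3))⁻¹ := by
  obtain ⟨n, rfl⟩ := Nat.exists_eq_add_of_le' hm
  have h := IsBigO.mul (isBigO_refl (fun b : ℕ => ((b : ℝ) ^ (2 * k + 1))⁻¹) atTop)
    (fD_final d k n hk)
  refine h.congr' ?_ ?_
  · filter_upwards [eventually_gt_atTop 0] with b hb
    have hb' : (b : ℝ) ≠ 0 := by positivity
    unfold fD eD
    push_cast
    have : ((n : ℝ) + 1 + 1) ≠ 0 := by positivity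
    field_simp
    ring
  · filter_upwards [eventually_gt_atTop 0] with b hb
    have hb' : (b : ℝ) ≠ 0 := by positivity
    field_simp
    ring
end

section
/- For every integer b ≥ 2, the exact convergent-series identity K(b,0) = b·log b + ∑_{m=1}^∞ (−1)^{m−1} ζ(m+1) u_{0;m}(b,0)/b^{m+1} holds, where the series on the right converges absolutely. -/
open Filter Asymptotics

/-- The Irwin harmonic sum `I(b,d,k)`: sum of `1/m` over positive integers `m`
whose base-`b` digit list contains the digit `d` exactly `k` times. -/
noncomputable def irwinSum (b d k : ℕ) : ℝ :=
  ∑' m : ℕ, if 0 < m ∧ (Nat.digits b m).count d = k then (1 : ℝ) / m else 0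

/-- `ζ(s) = ∑_{n ≥ 1} n^{-s}` for an integer exponent. -/
noncomputable def zetaR (s : ℕ) : ℝ := ∑' n : ℕ, 1 / ((n : ℝ) + 1) ^ s

namespace Kemp

/-- admissible `l`-digit strings without the digit zero -/
def A (b l : ℕ) : Finset ℕ :=
  (Finset.range (b ^ l)).filter fun n =>
    ((Finset.range l).filter fun i => n / b ^ i % b = 0).card = 0

lemma mem_A {b l n : ℕ} : n ∈ A b l ↔ n < b ^ l ∧ ∀ i < l, n / b ^ i % b ≠ 0 := by
  simp only [A, Finset.mem_filter, Finset.mem_range, Finset.card_eq_zero,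
    Finset.filter_eq_empty_iff]

lemma sum_mul (f : ℕ → ℝ) (a c : ℕ) :
    ∑ n ∈ Finset.range (a * c), f n =
      ∑ e ∈ Finset.range a, ∑ n ∈ Finset.range c, f (e * c + n) := by
  induction a with
  | zero => simp
  | succ a ih => rw [add_mul, one_mul, Finset.sum_range_add, ih, Finset.sum_range_succ]

lemma mem_A_succ {b l e n : ℕ} (hb : 2 ≤ b) (he : e < b) (hn : n < b ^ l) :
    e * b ^ l + n ∈ A b (l + 1) ↔ e ≠ 0 ∧ n ∈ A b l := by
  have hp : 0 < b ^ l := by positivity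
  have h1 : e * b ^ l + n < b ^ (l + 1) := by
    rw [pow_succ']; nlinarith
  have h2 : (e * b ^ l + n) / b ^ l % b = e := by
    rw [Nat.add_comm, Nat.add_mul_div_right _ _ hp, Nat.div_eq_of_lt hn, zero_add,
      Nat.mod_eq_of_lt he]
  have h3 : ∀ i < l, (e * b ^ l + n) / b ^ i % b = n / b ^ i % b := by
    intro i hi
    obtain ⟨k, rfl⟩ : ∃ k, l = i + (k + 1) := ⟨l - i - 1, by omega⟩
    have : e * b ^ (i + (k + 1)) + n = n + (e * b ^ k * b) * b ^ i := by ring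
    rw [this, Nat.add_mul_div_right _ _ (by positivity), Nat.add_mul_mod_self_right]
  rw [mem_A, mem_A]
  constructor
  · rintro ⟨-, h⟩
    refine ⟨?_, hn, fun i hi => ?_⟩
    · have := h l (by omega)
      rwa [h2] at this
    · have := h i (by omega)
      rwa [h3 i hi] at this
  · rintro ⟨h0, -, h⟩
    refine ⟨h1, fun i hi => ?_⟩
    rcases Nat.lt_succ_iff_lt_or_eq.1 hi with h' | rfl
    · rw [h3 i h']; exact h i h'
    · rwa [h2]

lemma sum_A_eq (b l : ℕ) (g : ℕ → ℝ) :
    ∑ n ∈ A b l, g n = ∑ n ∈ Finset.range (b ^ l), if n ∈ A b l then g n else 0 := by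
  rw [← Finset.sum_filter]
  congr 1
  ext n
  simp only [Finset.mem_filter, Finset.mem_range]
  exact ⟨fun h => ⟨(mem_A.1 h).1, h⟩, fun h => h.2⟩

lemma sum_A_succ {b : ℕ} (hb : 2 ≤ b) (l : ℕ) (g : ℕ → ℝ) :
    ∑ n ∈ A b (l + 1), g n =
      ∑ e ∈ Finset.range (b - 1), ∑ n ∈ A b l, g ((e + 1) * b ^ l + n) := by
  rw [sum_A_eq, pow_succ', sum_mul]
  obtain ⟨c, rfl⟩ : ∃ c, b = c + 1 := ⟨b - 1, by omega⟩
  rw [Finset.sum_range_succ']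
  have h0 : ∑ n ∈ Finset.range ((c + 1) ^ l),
      (if 0 * (c + 1) ^ l + n ∈ A (c + 1) (l + 1) then g (0 * (c + 1) ^ l + n) else 0) = 0 := by
    refine Finset.sum_eq_zero fun n hn => if_neg ?_
    rw [mem_A_succ hb (by omega) (Finset.mem_range.1 hn)]
    simp
  rw [h0, add_zero, Nat.add_sub_cancel]
  refine Finset.sum_congr rfl fun e he => ?_
  rw [sum_A_eq]
  refine Finset.sum_congr rfl fun n hn => ?_
  have := Finset.mem_range.1 he
  simp only [mem_A_succ hb (show e + 1 < c + 1 by omega) (Finset.mem_range.1 hn)]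
  simp

lemma A_zero (b : ℕ) : A b 0 = {0} := by
  ext n; simp [mem_A]

lemma card_A {b : ℕ} (hb : 2 ≤ b) (l : ℕ) : ∑ _n ∈ A b l, (1 : ℝ) = ((b : ℝ) - 1) ^ l := by
  induction l with
  | zero => simp [A_zero]
  | succ l ih =>
    rw [sum_A_succ hb, ih]
    simp only [Finset.sum_const, Finset.card_range, nsmul_eq_mul]
    rw [Nat.cast_sub (by omega), pow_succ']
    simp

/-- weights -/
noncomputable def w (b : ℕ) (p : ℕ × ℕ) : ℝ := if p.2 ∈ A b p.1 then ((b : ℝ) ^ p.1)⁻¹ else 0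

/-- points -/
noncomputable def x (b : ℕ) (p : ℕ × ℕ) : ℝ :=
  if p.2 ∈ A b p.1 then (p.2 : ℝ) / (b : ℝ) ^ p.1 else 0

lemma w_nonneg (b : ℕ) (p : ℕ × ℕ) : 0 ≤ w b p := by
  unfold w; split_ifs <;> positivity

lemma x_nonneg (b : ℕ) (p : ℕ × ℕ) : 0 ≤ x b p := by
  unfold x; split_ifs <;> positivity

lemma x_le {b : ℕ} (hb : 2 ≤ b) (p : ℕ × ℕ) : x b p ≤ 1 := by
  unfold x; split_ifs with h
  · have : (p.2 : ℝ) < (b : ℝ) ^ p.1 := by exact_mod_cast (mem_A.1 h).1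
    rw [div_le_one (by positivity)]
    exact this.le
  · exact zero_le_one

lemma tsum_row (b l : ℕ) (h : ℕ → ℝ) :
    HasSum (fun n => if n ∈ A b l then h n else 0) (∑ n ∈ A b l, h n) := by
  have : HasSum (fun n => if n ∈ A b l then h n else 0)
      (∑ n ∈ A b l, if n ∈ A b l then h n else 0) :=
    hasSum_sum_of_ne_finset_zero (fun n hn => if_neg hn)
  rwa [Finset.sum_congr rfl (fun n hn => if_pos hn)] at this

lemma hasSum_rows {b : ℕ} (h : ℕ → ℕ → ℝ)
    (hs : Summable (fun p : ℕ × ℕ => if p.2 ∈ A b p.1 then h p.1 p.2 else 0)) :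
    HasSum (fun l => ∑ n ∈ A b l, h l n)
      (∑' p : ℕ × ℕ, if p.2 ∈ A b p.1 then h p.1 p.2 else 0) :=
  hs.hasSum.prod_fiberwise fun l => tsum_row b l (h l)

lemma w_row {b : ℕ} (hb : 2 ≤ b) (l : ℕ) :
    ∑ n ∈ A b l, ((b : ℝ) ^ l)⁻¹ = (((b : ℝ) - 1) / b) ^ l := by
  have := card_A hb l
  rw [div_pow, ← this, Finset.sum_div]
  simp

lemma geo {b : ℕ} (hb : 2 ≤ b) : HasSum (fun l : ℕ => (((b : ℝ) - 1) / b) ^ l) b := by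
  have hb' : (2 : ℝ) ≤ b := by exact_mod_cast hb
  have := hasSum_geometric_of_lt_one (r := ((b : ℝ) - 1) / b)
    (div_nonneg (by linarith) (by linarith)) (by rw [div_lt_one (by linarith)]; linarith)
  convert this using 1
  have : (b : ℝ) ≠ 0 := by positivity
  field_simp
  simp

lemma w_summable {b : ℕ} (hb : 2 ≤ b) : Summable (w b) := by
  rw [summable_prod_of_nonneg (fun p => w_nonneg b p)]
  refine ⟨fun l => (tsum_row b l fun _ => ((b : ℝ) ^ l)⁻¹).summable, ?_⟩
  refine (geo hb).summable.congr fun l => ?_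
  rw [← w_row hb, ← (tsum_row b l fun _ => ((b : ℝ) ^ l)⁻¹).tsum_eq]
  rfl

lemma w_hasSum {b : ℕ} (hb : 2 ≤ b) : HasSum (w b) b := by
  have h := hasSum_rows (b := b) (fun l _ => ((b : ℝ) ^ l)⁻¹) (w_summable hb)
  simp only [w_row hb] at h
  have h2 := h.unique (geo hb)
  have h3 := (w_summable hb).hasSum
  rw [← h2]; exact h3

lemma wx_summable {b : ℕ} (hb : 2 ≤ b) (m : ℕ) : Summable (fun p => w b p * x b p ^ m) := by
  refine Summable.of_nonneg_of_le (fun p => mul_nonneg (w_nonneg b p) (pow_nonneg (x_nonneg b p) m))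
    (fun p => ?_) (w_summable hb)
  exact mul_le_of_le_one_right (w_nonneg b p) (pow_le_one₀ (x_nonneg b p) (x_le hb p))

lemma moment_eq {b : ℕ} (hb : 2 ≤ b) (m : ℕ) :
    momentU b 0 0 m = ∑' p, w b p * x b p ^ m := by
  have e : (fun p => w b p * x b p ^ m) = fun p : ℕ × ℕ =>
      if p.2 ∈ A b p.1 then ((b : ℝ) ^ (p.1 * (m + 1)))⁻¹ * (p.2 : ℝ) ^ m else 0 := by
    ext p
    unfold w x
    split_ifs with h
    · have : (b : ℝ) ≠ 0 := by positivity
      rw [div_pow]; field_simp; ring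
    · simp
  have hs := wx_summable hb m
  rw [e] at hs ⊢
  rw [← (hasSum_rows (fun l n => ((b : ℝ) ^ (l * (m + 1)))⁻¹ * (n : ℝ) ^ m) hs).tsum_eq]
  unfold momentU
  congr 1; ext l
  rw [← Finset.sum_filter, Finset.mul_sum]
  rfl

/-- kernel transform -/
noncomputable def U (b n : ℕ) : ℝ := ∑' p, w b p / (n + x b p)

lemma x_lower {b : ℕ} (hb : 2 ≤ b) (l n : ℕ) (h : n ∈ A b (l + 1)) : b ^ l ≤ n := by
  by_contra hc
  push Not at hc
  have := (mem_A.1 h).2 l (by omega)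
  rw [Nat.div_eq_of_lt hc] at this
  simp at this

lemma U_summable {b : ℕ} (hb : 2 ≤ b) (n : ℕ) : Summable (fun p => w b p / (n + x b p)) := by
  have hb' : (2 : ℝ) ≤ b := by exact_mod_cast hb
  refine Summable.of_nonneg_of_le (fun p => div_nonneg (w_nonneg b p)
    (add_nonneg (Nat.cast_nonneg _) (x_nonneg b p))) (fun p => ?_) ((w_summable hb).mul_right (b : ℝ))
  rcases Nat.eq_zero_or_pos n with rfl | hn
  · obtain ⟨l, n⟩ := p
    cases l with
    | zero =>
      have : x b (0, n) = 0 := by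
        unfold x; split_ifs with h
        · simp only [A_zero, Finset.mem_singleton] at h
          simp [h]
        · rfl
      rw [this]; simp
      exact mul_nonneg (w_nonneg _ _) (by positivity)
    | succ l =>
      by_cases h : n ∈ A b (l + 1)
      · have h1 : (b : ℝ) ^ l ≤ n := by exact_mod_cast x_lower hb l n h
        have h2 : 1 ≤ x b (l + 1, n) * b := by
          simp only [x, if_pos h]
          rw [pow_succ]
          have : (0 : ℝ) < b ^ l := by positivity
          field_simp
          linarith
        have h3 : 0 < x b (l + 1, n) := by
          by_contra hc
          nlinarith [x_nonneg b (l+1,n)]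
        simp only [Nat.cast_zero, zero_add]
        rw [div_le_iff₀ h3]
        nlinarith [w_nonneg b (l+1,n)]
      · have : w b (l + 1, n) = 0 := by simp [w, h]
        simp [this]
  · have h1 : (1 : ℝ) ≤ n := by exact_mod_cast hn
    have := x_nonneg b p
    rw [div_le_iff₀ (by linarith)]
    have := w_nonneg b p
    have : 1 ≤ (b : ℝ) * (n + x b p) := by nlinarith
    nlinarith

lemma U_rows {b : ℕ} (hb : 2 ≤ b) (n : ℕ) :
    HasSum (fun l => ∑ m ∈ A b l, 1 / ((n * b ^ l + m : ℕ) : ℝ)) (U b n) := by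
  have e : (fun p => w b p / (n + x b p)) = fun p : ℕ × ℕ =>
      if p.2 ∈ A b p.1 then 1 / ((n * b ^ p.1 + p.2 : ℕ) : ℝ) else 0 := by
    ext p
    unfold w x
    split_ifs with h
    · have : (b : ℝ) ≠ 0 := by positivity
      push_cast
      rw [div_eq_mul_inv _ ((n : ℝ) + _), ← mul_inv, one_div]
      congr 1
      field_simp
    · simp
  have hs := U_summable hb n
  unfold U
  rw [e] at hs ⊢
  exact hasSum_rows (fun l m => 1 / ((n * b ^ l + m : ℕ) : ℝ)) hs

lemma U_eq {b : ℕ} (hb : 2 ≤ b) (n : ℕ) :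
    U b n = 1 / n + ∑ e ∈ Finset.range (b - 1), U b (n * b + (e + 1)) := by
  have h := U_rows hb n
  rw [← h.tsum_eq, h.summable.tsum_eq_zero_add]
  congr 1
  · simp [A_zero]
  · have h2 := hasSum_sum (s := Finset.range (b - 1))
      (fun e _ => U_rows hb (n * b + (e + 1)))
    rw [← h2.tsum_eq]
    congr 1; ext l
    rw [sum_A_succ hb]
    refine Finset.sum_congr rfl fun e _ => Finset.sum_congr rfl fun m _ => ?_
    congr 2
    ring

lemma digits_iff {b : ℕ} (hb : 2 ≤ b) (l m : ℕ) (hm : 0 < m) :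
    m ∈ A b l ↔ (b.digits m).count 0 = 0 ∧ l = (b.digits m).length := by
  rw [List.count_eq_zero]
  have hkey : ∀ i, (b.digits m).getD i 0 = m / b ^ i % b := fun i => Nat.getD_digits m i hb
  constructor
  · intro h
    have hl : l = (b.digits m).length := by
      apply le_antisymm
      · by_contra hc
        push Not at hc
        have := (mem_A.1 h).2 _ hc
        rw [← hkey] at this
        simp at this
      · exact (Nat.digits_length_le_iff (by omega) m).2 (mem_A.1 h).1
    refine ⟨fun h0 => ?_, hl⟩
    obtain ⟨i, hi, hi0⟩ := List.mem_iff_getElem.1 h0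
    have := (mem_A.1 h).2 i (by omega)
    rw [← hkey, List.getD_eq_getElem _ _ hi] at this
    exact this hi0
  · rintro ⟨h0, rfl⟩
    refine mem_A.2 ⟨Nat.lt_base_pow_length_digits (by omega), fun i hi h => h0 ?_⟩
    rw [← hkey, List.getD_eq_getElem _ _ hi] at h
    rw [← h]
    exact List.getElem_mem hi

lemma irwin_eq {b : ℕ} (hb : 2 ≤ b) : irwinSum b 0 0 = U b 0 := by
  have hs := U_summable hb 0
  have e : (fun p => w b p / ((0 : ℕ) + x b p)) = fun p : ℕ × ℕ =>
      if p.2 ∈ A b p.1 then 1 / (p.2 : ℝ) else 0 := by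
    ext p
    unfold w x
    split_ifs with h
    · have : (b : ℝ) ≠ 0 := by positivity
      push_cast
      rw [div_eq_mul_inv _ ((0 : ℝ) + _), ← mul_inv, one_div]
      congr 1
      field_simp
      simp
    · simp
  unfold U irwinSum
  rw [e] at hs ⊢
  have h1 := (hs.prod_symm).tsum_prod
  rw [← (Equiv.prodComm ℕ ℕ).tsum_eq]
  refine Eq.trans ?_ h1.symm
  congr 1; ext m
  rcases Nat.eq_zero_or_pos m with rfl | hm
  · simp
  · simp only [Prod.swap, digits_iff hb _ m hm]
    by_cases hc : (b.digits m).count 0 = 0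
    · simp only [hc, hm, true_and, and_self, if_true]
      rw [tsum_ite_eq]
    · simp [hc]

lemma U_lower {b : ℕ} (hb : 2 ≤ b) (n : ℕ) (hn : 0 < n) : (b : ℝ) / (n + 1) ≤ U b n := by
  refine hasSum_le (fun p => ?_) ((w_hasSum hb).div_const ((n : ℝ) + 1)) (U_summable hb n).hasSum
  have := x_nonneg b p
  have : (0 : ℝ) < n := by exact_mod_cast hn
  exact div_le_div_of_nonneg_left (w_nonneg b p) (by linarith) (by linarith [x_le hb p])

lemma U_upper {b : ℕ} (hb : 2 ≤ b) (n : ℕ) (hn : 0 < n) : U b n ≤ (b : ℝ) / n := by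
  refine hasSum_le (fun p => ?_) (U_summable hb n).hasSum ((w_hasSum hb).div_const (n : ℝ))
  have := x_nonneg b p
  have : (0 : ℝ) < n := by exact_mod_cast hn
  exact div_le_div_of_nonneg_left (w_nonneg b p) (by linarith) (by linarith)

lemma D_summable {b : ℕ} (hb : 2 ≤ b) : Summable (fun n : ℕ => U b n - (b : ℝ) / (n + 1)) := by
  rw [← summable_nat_add_iff 1]
  have h2 : Summable (fun n : ℕ => (b : ℝ) * (1 / ((n + 1 : ℕ) : ℝ) ^ 2)) :=
    ((summable_nat_add_iff 1).2 (Real.summable_one_div_nat_pow.2 (by norm_num))).mul_left _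
  refine Summable.of_nonneg_of_le (fun n => ?_) (fun n => ?_) h2
  · exact sub_nonneg.2 (U_lower hb (n + 1) (by omega))
  · have := U_upper hb (n + 1) (by omega)
    refine (sub_le_sub_right this _).trans ?_
    push_cast
    have hn : (0 : ℝ) ≤ n := n.cast_nonneg
    have hbb : (0 : ℝ) ≤ b := b.cast_nonneg
    have : (b : ℝ) / (n + 1) - b / (n + 1 + 1) = b * (1 / ((n + 1) * (n + 2))) := by
      field_simp; ring
    rw [this]
    refine mul_le_mul_of_nonneg_left ?_ hbb
    exact one_div_le_one_div_of_le (by positivity) (by nlinarith)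

/-- real harmonic numbers -/
noncomputable def H (k : ℕ) : ℝ := ∑ i ∈ Finset.range k, 1 / ((i : ℝ) + 1)

lemma H_tendsto : Tendsto (fun k => H k - Real.log k) atTop (nhds Real.eulerMascheroniConstant) := by
  refine Real.tendsto_harmonic_sub_log.congr fun k => ?_
  simp [H, harmonic]

lemma tele {b : ℕ} (hb : 2 ≤ b) (M : ℕ) :
    U b 0 = ∑ N ∈ Finset.range M, (1 / ((N : ℝ) + 1) - U b ((N + 1) * b)) +
      (∑ n ∈ Finset.range ((M + 1) * b), U b n - ∑ n ∈ Finset.range (M + 1), U b n) := by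
  rw [sum_mul, ← Finset.sum_sub_distrib]
  have : ∀ N, ∑ e ∈ Finset.range b, U b (N * b + e) - U b N = U b (N * b) - 1 / N := by
    intro N
    rw [U_eq hb N]
    obtain ⟨c, rfl⟩ : ∃ c, b = c + 1 := ⟨b - 1, by omega⟩
    rw [Finset.sum_range_succ']
    simp
    ring
  simp only [this]
  rw [Finset.sum_range_succ', ← add_assoc, ← Finset.sum_add_distrib]
  simp

lemma R_tendsto {b : ℕ} (hb : 2 ≤ b) :
    Tendsto (fun M : ℕ => ∑ n ∈ Finset.range ((M + 1) * b), U b n -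
      ∑ n ∈ Finset.range (M + 1), U b n) atTop (nhds (b * Real.log b)) := by
  have hD := (D_summable hb).hasSum.tendsto_sum_nat
  have t1 : Tendsto (fun M : ℕ => M + 1) atTop atTop := tendsto_add_atTop_nat 1
  have t2 : Tendsto (fun M : ℕ => (M + 1) * b) atTop atTop :=
    tendsto_atTop_mono (fun M => by nlinarith) t1
  have h1 := (hD.comp t2).sub (hD.comp t1)
  have h2 := ((H_tendsto.comp t2).sub (H_tendsto.comp t1)).const_mul (b : ℝ)
  have h3 := (h1.add h2).add_const ((b : ℝ) * Real.log b)
  simp only [sub_self, mul_zero, add_zero, zero_add] at h3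
  refine h3.congr fun M => ?_
  have e : ∀ k, ∑ n ∈ Finset.range k, (U b n - (b : ℝ) / (n + 1)) =
      ∑ n ∈ Finset.range k, U b n - b * H k := by
    intro k
    rw [Finset.sum_sub_distrib, H, Finset.mul_sum]
    simp [div_eq_mul_inv]
  simp only [Function.comp, e]
  have : Real.log (((M + 1) * b : ℕ) : ℝ) = Real.log ((M + 1 : ℕ) : ℝ) + Real.log b := by
    rw [Nat.cast_mul, Real.log_mul (by positivity) (by positivity)]
  rw [this]; ring

/-- triple-indexed term -/
noncomputable def F (b j : ℕ) (q : ℕ × (ℕ × ℕ)) : ℝ :=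
  (-1) ^ j * (1 / ((q.1 : ℝ) + 1) ^ (j + 2)) * (w b q.2 * x b q.2 ^ (j + 1)) / (b : ℝ) ^ (j + 2)

lemma z_summable (s : ℕ) : Summable (fun n : ℕ => 1 / ((n : ℝ) + 1) ^ (s + 2)) := by
  have := (summable_nat_add_iff 1).2 (Real.summable_one_div_nat_pow (p := s + 2).2 (by omega))
  simpa using this

lemma F_summable {b : ℕ} (hb : 2 ≤ b) :
    Summable (fun r : ℕ × (ℕ × (ℕ × ℕ)) => F b r.1 r.2) := by
  have hb' : (2 : ℝ) ≤ b := by exact_mod_cast hb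
  have g : Summable (fun j : ℕ => (1 / 2 : ℝ) ^ j) := summable_geometric_two
  have s1 := (z_summable 0).mul_of_nonneg (w_summable hb) (fun n => by positivity) (w_nonneg b)
  have s2 := g.mul_of_nonneg s1 (fun n => by positivity)
    (fun q => mul_nonneg (by positivity) (w_nonneg b _))
  refine Summable.of_norm_bounded s2 fun r => ?_
  obtain ⟨j, N, p⟩ := r
  have hw := w_nonneg b p
  have hx := x_nonneg b p
  have hx1 : x b p ^ (j + 1) ≤ 1 := pow_le_one₀ hx (x_le hb p)
  simp only [F, norm_mul, norm_div, norm_pow, norm_neg, norm_one, one_pow, one_mul,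
    Real.norm_of_nonneg hw, Real.norm_of_nonneg hx, zero_add, Real.norm_natCast]
  rw [Real.norm_of_nonneg (by positivity : (0 : ℝ) ≤ (N : ℝ) + 1)]
  have i1 : 1 / ((N : ℝ) + 1) ^ (j + 2) ≤ 1 / ((N : ℝ) + 1) ^ 2 :=
    one_div_le_one_div_of_le (by positivity)
      (pow_le_pow_right₀ (by linarith [N.cast_nonneg (α := ℝ)]) (by omega))
  have i2 : 1 / (b : ℝ) ^ (j + 2) ≤ (1 / 2) ^ j := by
    rw [div_pow, one_pow]
    refine one_div_le_one_div_of_le (by positivity) ?_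
    calc (2 : ℝ) ^ j ≤ 2 ^ (j + 2) := pow_le_pow_right₀ (by norm_num) (by omega)
      _ ≤ (b : ℝ) ^ (j + 2) := pow_le_pow_left₀ (by norm_num) hb' _
  have i3 : w b p * x b p ^ (j + 1) ≤ w b p := mul_le_of_le_one_right hw hx1
  calc _ = 1 / (b : ℝ) ^ (j + 2) * (1 / ((N : ℝ) + 1) ^ (j + 2) * (w b p * x b p ^ (j + 1))) := by
        ring
    _ ≤ _ := by gcongr

lemma F_tsum {b : ℕ} (hb : 2 ≤ b) (j : ℕ) : ∑' q, F b j q =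
    (-1 : ℝ) ^ j * zetaR (j + 2) * momentU b 0 0 (j + 1) / (b : ℝ) ^ (j + 2) := by
  rw [moment_eq hb, zetaR]
  have s := (z_summable j).mul_of_nonneg (wx_summable hb (j + 1)) (fun n => by positivity)
    (fun p => mul_nonneg (w_nonneg b p) (pow_nonneg (x_nonneg b p) _))
  have h := (z_summable j).tsum_mul_tsum (wx_summable hb (j + 1)) s
  rw [mul_assoc, h, ← tsum_mul_left, ← tsum_div_const]
  congr 1; ext q
  simp only [F]; ring

lemma F_geo {b : ℕ} (hb : 2 ≤ b) (N : ℕ) (p : ℕ × ℕ) :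
    HasSum (fun j => F b j (N, p))
      (w b p / (((N + 1) * b : ℕ) : ℝ) - w b p / (((N + 1) * b : ℕ) + x b p)) := by
  have hb' : (2 : ℝ) ≤ b := by exact_mod_cast hb
  have hx := x_nonneg b p
  have hx1 := x_le hb p
  have hN : (0 : ℝ) ≤ N := N.cast_nonneg
  set a : ℝ := (((N + 1) * b : ℕ) : ℝ) with ha
  have ha' : a = (N + 1) * b := by rw [ha]; push_cast; ring
  have ha2 : 2 ≤ a := by rw [ha']; nlinarith
  have h := (hasSum_geometric_of_abs_lt_one (r := -(x b p / a)) (by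
    rw [abs_neg, abs_of_nonneg (by positivity), div_lt_one (by linarith)]; linarith)).mul_left
      (w b p * x b p / a ^ 2)
  have ha0 : a ≠ 0 := by linarith
  have hax : a + x b p ≠ 0 := by linarith
  have e1 : (fun j => F b j (N, p)) =
      fun j => w b p * x b p / a ^ 2 * (-(x b p / a)) ^ j := by
    ext j
    have : -(x b p / a) = (-1) * (x b p) * a⁻¹ := by ring
    rw [this, mul_pow, mul_pow, F, div_eq_mul_inv _ ((b : ℝ) ^ (j + 2)), inv_pow]
    have : a ^ (j + 2) = ((N : ℝ) + 1) ^ (j + 2) * b ^ (j + 2) := by rw [ha', mul_pow]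
    have h5 : (w b p * x b p / a ^ 2) * ((-1) ^ j * x b p ^ j * (a ^ j)⁻¹) =
      (-1) ^ j * (w b p * x b p ^ (j + 1)) * (a ^ (j + 2))⁻¹ := by
      rw [pow_add a, mul_inv]; ring
    rw [h5, this, mul_inv]; ring
  have e2 : w b p / a - w b p / (a + x b p) =
      w b p * x b p / a ^ 2 * (1 - -(x b p / a))⁻¹ := by
    have : 1 - -(x b p / a) = (a + x b p) / a := by field_simp; ring
    rw [this]
    field_simp
    ring
  rw [e1, e2]
  exact h

lemma main {b : ℕ} (hb : 2 ≤ b) :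
    HasSum (fun N : ℕ => 1 / ((N : ℝ) + 1) - U b ((N + 1) * b)) (∑' j, ∑' q, F b j q) := by
  have hF := F_summable hb
  have hb0 : (b : ℝ) ≠ 0 := by positivity
  have h1 : ∑' j, ∑' q, F b j q = ∑' q, ∑' j, F b j q := Summable.tsum_comm hF.prod_symm
  have h2 : Summable (fun q => ∑' j, F b j q) := hF.prod_symm.prod
  rw [h1]
  refine h2.hasSum.prod_fiberwise fun N => ?_
  simp only [(F_geo hb N _).tsum_eq]
  refine HasSum.sub ?_ (U_summable hb _).hasSum
  have h3 := (w_hasSum hb).div_const (((N + 1) * b : ℕ) : ℝ)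
  have h4 : (b : ℝ) / (((N + 1) * b : ℕ) : ℝ) = 1 / ((N : ℝ) + 1) := by
    push_cast
    field_simp
  rwa [h4] at h3

end Kemp

/-- Exact convergent series (indexed so that `m ≥ 1` corresponds to `m = j + 1`):
`K(b,0) = b log b + ∑_{m≥1} (−1)^{m−1} ζ(m+1) u_{0;m}(b,0) / b^{m+1}`,
the series converging absolutely. -/
theorem kempner_zero_series (b : ℕ) (hb : 2 ≤ b) :
    Summable (fun j : ℕ =>
      |(-1 : ℝ) ^ j * zetaR (j + 2) * momentU b 0 0 (j + 1) / (b : ℝ) ^ (j + 2)|) ∧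
    irwinSum b 0 0 = (b : ℝ) * Real.log b +
      ∑' j : ℕ, (-1 : ℝ) ^ j * zetaR (j + 2) * momentU b 0 0 (j + 1) / (b : ℝ) ^ (j + 2) := by
  simp only [← Kemp.F_tsum hb]
  refine ⟨(Kemp.F_summable hb).prod.abs, ?_⟩
  rw [Kemp.irwin_eq hb, add_comm]
  have h := (Kemp.main hb).tendsto_sum_nat.add (Kemp.R_tendsto hb)
  refine tendsto_nhds_unique ?_ h
  simp only [← Kemp.tele hb]
  exact tendsto_const_nhds
end
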